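/- Let ℍ be the hexagonal lattice in its brick-wall representation: the simple graph with vertex set ℤ × ℤ in which (a,b) and (c,d) are adjacent if and only if either b = d and |a − c| = 1, or a = c, |b − d| = 1, and a + min(b,d) is even. Then for every vertex v of ℍ, σ_n(v)^{1/n} → √(2 + √2) as n → ∞; that is, the connective constant of the hexagonal lattice equals √(2+√2). -/

import Mathlib

open Filter

/-- The number of `n`-step self-avoiding walks in `G` starting at `v`. -/
noncomputable def sawCount {V : Type*} (G : SimpleGraph V) (v : V) (n : ℕ) : ℕ :=
  Nat.card {p : Σ w : V, G.Walk v w // p.2.IsPath ∧ p.2.length = n}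

/-- The hexagonal lattice in its brick-wall representation: vertex set `ℤ × ℤ`, with
`(a,b)` and `(c,d)` adjacent iff either `b = d` and `|a − c| = 1`, or `a = c`,
`|b − d| = 1`, and `a + min b d` is even. -/
def hexLattice : SimpleGraph (ℤ × ℤ) :=
  SimpleGraph.fromRel (fun x y =>
    (x.2 = y.2 ∧ |x.1 - y.1| = 1) ∨
    (x.1 = y.1 ∧ |x.2 - y.2| = 1 ∧ Even (x.1 + min x.2 y.2)))

/-!
Walks are weighted by `x ^ length`. At `xc = 1 / √(2 + √2)` the parafermionic observable of
Duminil-Copin and Smirnov satisfies a local linear relation at every vertex. Summed over a domain,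
the interior terms cancel and a relation remains between the weights of the walks leaving through
the various sides of its boundary; in particular the bridges of each height have bounded weight at
`xc`. Below `xc` the weight of the bridges thus decays geometrically in the height, and the
Hammersley–Welsh decomposition into bridges shows that the total weight of all walks is finite.

Suppose that it were finite at `xc`. The relations for the half-plane and for the strip of height
`T` show that the arches which rise above the strip weigh at least as much as the bridges across it.
But cutting such an arch at its last visit above the strip, as seen from the tip, factors it into
such a bridge and a walk longer than `T`, and the walks longer than `T` have small weight for large
`T`. Hence the total weight diverges at `xc`, and `xc⁻¹` is the growth rate of the submultiplicative
counts.
-/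

namespace HexSAW

open scoped ENNReal NNReal

/-! ### Growth of sequences -/

theorem one_le_mul_pow_of_tsum_eq_top {a : ℕ → ℕ} {r : ℝ≥0∞} (hr : r ≠ ∞)
    (ha : ∀ m n, a (m + n) ≤ a m * a n) (hs : ∑' n, (a n : ℝ≥0∞) * r ^ n = ∞)
    {k : ℕ} (hk : k ≠ 0) : 1 ≤ (a k : ℝ≥0∞) * r ^ k := by
  by_contra! hlt
  have : NeZero k := ⟨hk⟩
  have hiter : ∀ q j, (a (j + q * k) : ℝ≥0∞) ≤ a k ^ q * a j := fun q j => by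
    induction q with
    | zero => simp
    | succ q ih =>
      calc (a (j + (q + 1) * k) : ℝ≥0∞) = a (k + (j + q * k)) := by congr 2; ring
        _ ≤ a k * a (j + q * k) := by exact_mod_cast ha _ _
        _ ≤ a k * (a k ^ q * a j) := by gcongr
        _ = a k ^ (q + 1) * a j := by ring
  have hterm : ∀ (q : ℕ) (j : Fin k), (a (j + q * k) : ℝ≥0∞) * r ^ (j + q * k) ≤
      (a k * r ^ k) ^ q * (a j * r ^ (j : ℕ)) := fun q j =>
    calc (a (j + q * k) : ℝ≥0∞) * r ^ (j + q * k) ≤ a k ^ q * a j * r ^ (j + q * k) := by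
          gcongr; exact hiter q j
      _ = (a k * r ^ k) ^ q * (a j * r ^ (j : ℕ)) := by rw [pow_add, pow_mul', mul_pow]; ring
  refine absurd hs (ne_of_lt ?_)
  calc ∑' n, (a n : ℝ≥0∞) * r ^ n
      = ∑' p : ℕ × Fin k, (a (p.2 + p.1 * k) : ℝ≥0∞) * r ^ (p.2 + p.1 * k) := by
        rw [← (Nat.divModEquiv k).symm.tsum_eq]
        simp [Nat.divModEquiv, add_comm]
    _ ≤ ∑' p : ℕ × Fin k, ((a k : ℝ≥0∞) * r ^ k) ^ p.1 * (a p.2 * r ^ (p.2 : ℕ)) :=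
        ENNReal.tsum_le_tsum fun p => hterm p.1 p.2
    _ = (1 - a k * r ^ k)⁻¹ * ∑ j : Fin k, (a j : ℝ≥0∞) * r ^ (j : ℕ) := by
        rw [ENNReal.tsum_prod
          (f := fun q (j : Fin k) => ((a k : ℝ≥0∞) * r ^ k) ^ q * (a j * r ^ (j : ℕ)))]
        simp_rw [ENNReal.tsum_mul_left, ENNReal.tsum_mul_right, tsum_fintype,
          ENNReal.tsum_geometric]
    _ < ∞ := ENNReal.mul_lt_top (by simpa using hlt)
        (ENNReal.sum_lt_top.2 fun j _ => ENNReal.mul_lt_top (ENNReal.natCast_lt_top _)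
          (ENNReal.pow_lt_top hr.lt_top))

theorem tendsto_rpow_inv_of_submultiplicative {a : ℕ → ℕ} {r : ℝ≥0} (hr : 0 < r)
    (ha : ∀ m n, a (m + n) ≤ a m * a n)
    (hconv : ∀ x : ℝ≥0, 0 < x → x < r → ∑' n, (a n : ℝ≥0∞) * (x : ℝ≥0∞) ^ n ≠ ∞)
    (hdiv : ∑' n, (a n : ℝ≥0∞) * (r : ℝ≥0∞) ^ n = ∞) :
    Tendsto (fun n : ℕ => (a n : ℝ) ^ ((1 : ℝ) / n)) atTop (nhds (r : ℝ)⁻¹) := by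
  refine tendsto_order.2 ⟨fun c hc => ?_, fun c hc => ?_⟩
  · filter_upwards [eventually_ne_atTop 0] with n hn
    refine hc.trans_le ?_
    have h : (1 : ℝ≥0) ≤ a n * r ^ n := by
      exact_mod_cast one_le_mul_pow_of_tsum_eq_top ENNReal.coe_ne_top ha hdiv hn
    have h' : ((r : ℝ)⁻¹) ^ n ≤ a n := by
      rw [inv_pow, inv_le_iff_one_le_mul₀ (by positivity)]
      exact_mod_cast h
    rw [one_div, Real.le_rpow_inv_iff_of_pos (by positivity) (by positivity) (by positivity)]
    exact_mod_cast h'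
  · have hr' : (0 : ℝ) < r := hr
    obtain ⟨d, hd, hdc⟩ := exists_between hc
    have hd0 : 0 < d := (inv_pos.2 hr').trans hd
    lift d to ℝ≥0 using hd0.le
    have hx : d⁻¹ < r := by
      rw [← NNReal.coe_lt_coe, NNReal.coe_inv]; exact inv_lt_of_inv_lt₀ hr' hd
    have hlim := ENNReal.tendsto_atTop_zero_of_tsum_ne_top (hconv _ (inv_pos.2 hd0) hx)
    filter_upwards [hlim.eventually_lt_const one_pos, eventually_ne_atTop 0] with n hn hn0
    refine lt_of_le_of_lt ?_ hdc
    have hn' : (a n : ℝ≥0) * d⁻¹ ^ n < 1 := by exact_mod_cast hn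
    rw [inv_pow, ← div_eq_mul_inv, div_lt_one (by exact_mod_cast pow_pos hd0 n)] at hn'
    rw [one_div, Real.rpow_inv_le_iff_of_pos (by positivity) hd0.le (by positivity)]
    exact_mod_cast hn'.le

theorem exists_forall_le_of_le_mul_one_add {V a : ℕ → ℝ≥0∞} (hV : V 0 ≠ ∞) (ha : ∑' n, a n ≠ ∞)
    (h : ∀ n, V (n + 1) ≤ V n * (1 + a n)) : ∃ C ≠ ∞, ∀ n, V n ≤ C := by
  lift a to ℕ → ℝ≥0 using fun n => ENNReal.ne_top_of_tsum_ne_top ha n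
  have hsum : Summable fun n => (a n : ℝ) :=
    NNReal.summable_coe.2 (ENNReal.tsum_coe_ne_top_iff_summable.1 ha)
  have hstep : ∀ n, V n ≤ V 0 * ENNReal.ofReal (Real.exp (∑ i ∈ Finset.range n, (a i : ℝ))) := by
    intro n
    induction n with
    | zero => simp
    | succ n ih =>
      have hexp : 1 + (a n : ℝ≥0∞) ≤ ENNReal.ofReal (Real.exp (a n)) := by
        rw [← ENNReal.ofReal_coe_nnreal, ← ENNReal.ofReal_one,
          ← ENNReal.ofReal_add zero_le_one (a n).coe_nonneg, add_comm]
        exact ENNReal.ofReal_le_ofReal (Real.add_one_le_exp _)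
      rw [Finset.sum_range_succ, Real.exp_add, ENNReal.ofReal_mul (Real.exp_nonneg _), ← mul_assoc]
      exact (h n).trans (mul_le_mul' ih hexp)
  refine ⟨V 0 * ENNReal.ofReal (Real.exp (∑' n, (a n : ℝ))),
    ENNReal.mul_ne_top hV ENNReal.ofReal_ne_top, fun n => (hstep n).trans ?_⟩
  gcongr
  exact hsum.sum_le_tsum _ fun _ _ => NNReal.coe_nonneg _

/-! ### Self-avoiding walks as lists -/

section Saws

variable {V W : Type*} {G : SimpleGraph V} {G' : SimpleGraph W} {v w z : V} {l r s : List V}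

theorem exists_append_cons_of_exists_mem {P : V → Prop}
    (h : ∃ z ∈ l, P z) : ∃ s z r, l = s ++ z :: r ∧ P z ∧ ∀ w ∈ s, ¬P w := by
  classical
  obtain ⟨z, hz⟩ := Option.isSome_iff_exists.1 (List.find?_isSome (p := (P ·)).2 (by simpa using h))
  obtain ⟨hP, s, r, rfl, hs⟩ := List.find?_eq_some_iff_append.1 hz
  exact ⟨s, z, r, rfl, by simpa using hP, by simpa using hs⟩

theorem exists_append_cons_of_exists_mem' {P : V → Prop}
    (h : ∃ z ∈ l, P z) : ∃ s z r, l = s ++ z :: r ∧ P z ∧ ∀ w ∈ r, ¬P w := by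
  obtain ⟨s, z, r, hl, hz, hs⟩ :=
    exists_append_cons_of_exists_mem (l := l.reverse) (by simpa using h)
  exact ⟨r.reverse, z, s.reverse, by simpa using congr_arg List.reverse hl, hz, by simpa using hs⟩

/-- The self-avoiding walks in `G` starting at `v`, encoded as lists of vertices with the tip at
the head and the root `v` at the end. -/
def saws (G : SimpleGraph V) (v : V) : Set (List V) :=
  {l | l.IsChain G.Adj ∧ l.Nodup ∧ l.getLast? = some v}

theorem singleton_mem_saws : [v] ∈ saws G v := by simp [saws]

theorem cons_mem_saws (hl : z :: l ∈ saws G v) (h : G.Adj w z) (hw : w ∉ z :: l) :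
    w :: z :: l ∈ saws G v :=
  ⟨List.isChain_cons_cons.2 ⟨h, hl.1⟩, List.nodup_cons.2 ⟨hw, hl.2.1⟩, by
    rw [List.getLast?_cons_cons]; exact hl.2.2⟩

theorem right_mem_saws (h : s ++ z :: r ∈ saws G v) : z :: r ∈ saws G v :=
  ⟨h.1.right_of_append, h.2.1.of_append_right, by
    simpa [List.getLast?_append] using h.2.2⟩

theorem left_mem_saws (h : s ++ z :: r ∈ saws G v) : s ++ [z] ∈ saws G z := by
  rw [List.append_cons] at h
  exact ⟨h.1.left_of_append, h.2.1.of_append_left, by simp⟩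

theorem map_mem_saws (f : G ↪g G') (hl : l ∈ saws G v) : l.map f ∈ saws G' (f v) :=
  ⟨(List.isChain_map _).2 (hl.1.imp fun _ _ => f.map_adj_iff.2), hl.2.1.map f.injective, by
    rw [List.getLast?_map, hl.2.2, Option.map_some]⟩

theorem reverse_mem_saws (hl : z :: l ∈ saws G v) : (z :: l).reverse ∈ saws G z :=
  ⟨List.isChain_reverse.2 (hl.1.imp fun _ _ h => h.symm), List.nodup_reverse.2 hl.2.1, by simp⟩

theorem length_pos_of_mem_saws (hl : l ∈ saws G v) : 0 < l.length :=
  List.length_pos_iff.2 (by rintro rfl; simpa using hl.2.2)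

theorem sawCount_eq_ncard (G : SimpleGraph V) (v : V) (n : ℕ) :
    sawCount G v n = {l ∈ saws G v | l.length = n + 1}.ncard := by
  have hmem : ∀ p : {p : Σ w, G.Walk v w // p.2.IsPath ∧ p.2.length = n},
      p.1.2.reverse.support ∈ {l ∈ saws G v | l.length = n + 1} := by
    rintro ⟨⟨w, p⟩, hp, hn⟩
    refine ⟨⟨p.reverse.isChain_adj_support, hp.reverse.support_nodup, ?_⟩, by simp [hn]⟩
    rw [List.getLast?_eq_some_getLast (by simp), SimpleGraph.Walk.getLast_support]
  refine Nat.card_eq_of_bijective (fun p => ⟨_, hmem p⟩) ⟨?_, ?_⟩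
  · rintro ⟨⟨w, p⟩, _⟩ ⟨⟨w', p'⟩, _⟩ h
    have hs : p.support = p'.support := by simpa using h
    obtain rfl : w = w' := by
      rw [← p.getLast_support, ← p'.getLast_support]
      simp only [hs]
    obtain rfl := SimpleGraph.Walk.ext_support hs
    rfl
  · rintro ⟨l, ⟨hchain, hnodup, hlast⟩, hn⟩
    have hne : l ≠ [] := by rintro rfl; simp at hn
    obtain rfl : l.getLast hne = v := by
      rwa [List.getLast?_eq_some_getLast hne, Option.some_inj] at hlast
    let p := SimpleGraph.Walk.ofSupport l hne hchain
    have hp : p.support = l := SimpleGraph.Walk.support_ofSupport hne hchain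
    have hlen := p.length_support
    refine ⟨⟨⟨_, p.reverse⟩, ?_, ?_⟩, ?_⟩
    · simpa [SimpleGraph.Walk.isPath_def, hp] using hnodup
    · rw [hp, hn] at hlen; simpa using hlen.symm
    · simp [hp]

theorem finite_saws_length [G.LocallyFinite] (v : V) (n : ℕ) :
    {l ∈ saws G v | l.length = n + 1}.Finite := by
  induction n with
  | zero =>
    refine (Set.finite_singleton [v]).subset fun l hl => ?_
    obtain ⟨z, rfl⟩ := List.length_eq_one_iff.1 hl.2
    simpa [eq_comm] using hl.1.2.2
  | succ n ih =>
    refine (ih.biUnion (t := fun l => ⋃ z ∈ l.head?, (fun u => u :: l) '' G.neighborSet z)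
      fun l _ => ?_).subset ?_
    · cases l with
      | nil => simp
      | cons z l => simpa using (Set.toFinite (G.neighborSet z)).image _
    · rintro (_ | ⟨u, _ | ⟨z, l⟩⟩) ⟨hl, hn⟩
      · simp at hn
      · simp at hn
      · refine Set.mem_biUnion (x := z :: l) ⟨right_mem_saws (s := [u]) hl, by simpa using hn⟩ ?_
        simpa using (List.isChain_cons_cons.1 hl.1).1.symm

theorem sawCount_add_le [G.LocallyFinite] (htrans : ∀ v w, ∃ e : G ≃g G, e v = w) (v : V)
    (m n : ℕ) : sawCount G v (m + n) ≤ sawCount G v m * sawCount G v n := by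
  choose e he using fun z => htrans z v
  have hsplit : ∀ l ∈ {l ∈ saws G v | l.length = m + n + 1}, ∃ s z r,
      l = s ++ z :: r ∧ s.length = m ∧ r.length = n := fun l hl => by
    have hlt : m < l.length := by have := hl.2; omega
    refine ⟨l.take m, l[m], l.drop (m + 1), by simp, by simp [hlt.le], ?_⟩
    have := hl.2
    rw [List.length_drop]; omega
  have : Nonempty V := ⟨v⟩
  choose! s z r hl hs hr using hsplit
  simp only [sawCount_eq_ncard, ← Set.ncard_prod]
  refine Set.ncard_le_ncard_of_injOn (fun l => ((s l ++ [z l]).map (e (z l)), z l :: r l))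
    (fun l h => ?_) (fun l h l' h' heq => ?_)
    ((finite_saws_length v m).prod (finite_saws_length v n))
  · have hmem := h.1
    rw [hl l h] at hmem
    refine ⟨⟨?_, by simp [hs l h]⟩, right_mem_saws hmem, by simp [hr l h]⟩
    simpa [he] using map_mem_saws (e (z l)).toEmbedding (left_mem_saws hmem)
  · simp only [Prod.mk.injEq, List.cons.injEq] at heq
    obtain ⟨hmap, hz, hr'⟩ := heq
    rw [hz] at hmap
    rw [hl l h, hl l' h', hr', List.append_cons, List.append_cons (s l'),
      ← List.map_injective_iff.2 (e (z l')).injective hmap, hz]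

end Saws

/-! ### Generating functions of sets of lists -/

section GenFun

variable {α β γ : Type*} {x y : ℝ≥0∞} {S T : Set (List α)}

/-- The generating function, at `x`, of the lengths of the members of a set of lists. -/
noncomputable def genFun (x : ℝ≥0∞) (S : Set (List α)) : ℝ≥0∞ := ∑' l : S, x ^ l.1.length

theorem genFun_mono (h : S ⊆ T) : genFun x S ≤ genFun x T :=
  ENNReal.tsum_mono_subtype (fun l : List α => x ^ l.length) h

theorem genFun_union_le : genFun x (S ∪ T) ≤ genFun x S + genFun x T :=
  ENNReal.tsum_union_le (fun l : List α => x ^ l.length) S T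

theorem genFun_ne_top_of_finite (hx : x ≠ ∞) (hS : S.Finite) : genFun x S ≠ ∞ := by
  have := hS.fintype
  rw [genFun, tsum_fintype]
  exact (ENNReal.sum_lt_top.2 fun _ _ => ENNReal.pow_lt_top hx.lt_top).ne

theorem genFun_singleton (l : List α) : genFun x {l} = x ^ l.length :=
  tsum_singleton l fun l => x ^ l.length

theorem pow_length_le_genFun {l : List α} (hl : l ∈ S) : x ^ l.length ≤ genFun x S :=
  ENNReal.le_tsum (f := fun l : S => x ^ l.1.length) ⟨l, hl⟩

theorem pow_mul_genFun_le_mul {c : ℕ} {A : Set (List β)} {B : Set (List γ)}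
    (f : List β → List γ → List α)
    (h : ∀ l ∈ S, ∃ a ∈ A, ∃ b ∈ B, f a b = l ∧ l.length + c = a.length + b.length) :
    x ^ c * genFun x S ≤ genFun x A * genFun x B := by
  choose a ha b hb hf hlen using fun l : S => h l.1 l.2
  have hinj : Function.Injective fun l : S => ((⟨a l, ha l⟩, ⟨b l, hb l⟩) : A × B) := by
    intro l l' h'
    simp only [Prod.mk.injEq, Subtype.mk.injEq] at h'
    exact Subtype.ext (by rw [← hf l, ← hf l', h'.1, h'.2])
  calc x ^ c * genFun x S = ∑' l : S, x ^ (a l).length * x ^ (b l).length := by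
        simp_rw [genFun, ← ENNReal.tsum_mul_left, ← pow_add, ← hlen, add_comm]
    _ ≤ ∑' p : A × B, x ^ p.1.1.length * x ^ p.2.1.length :=
        ENNReal.tsum_comp_le_tsum_of_injective hinj fun p => x ^ p.1.1.length * x ^ p.2.1.length
    _ = genFun x A * genFun x B := by
        simp_rw [genFun, ENNReal.tsum_prod (f := fun (a : A) (b : B) => x ^ a.1.length *
          x ^ b.1.length), ENNReal.tsum_mul_left, ENNReal.tsum_mul_right]

theorem pow_mul_genFun_le {c : ℕ} {A : Set (List β)} (f : List β → List α)
    (h : ∀ l ∈ S, ∃ a ∈ A, f a = l ∧ l.length + c = a.length) :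
    x ^ c * genFun x S ≤ genFun x A := by
  simpa [genFun_singleton] using pow_mul_genFun_le_mul (x := x) (B := {([] : List β)})
    (fun a _ => f a) fun l hl => by simpa using h l hl

theorem genFun_le_mul_genFun {A : Set (List β)} (f : List β → List α)
    (h : ∀ l ∈ S, ∃ a ∈ A, f a = l ∧ l.length = a.length + 1) : genFun x S ≤ x * genFun x A := by
  simpa [genFun_singleton, mul_comm] using pow_mul_genFun_le_mul (x := x) (c := 0)
    (B := {[()]}) (fun a _ => f a) fun l hl => by simpa using h l hl

theorem genFun_iUnion_le {S : ℕ → Set (List α)} {c : ℝ≥0∞} (hS : Monotone S)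
    (h : ∀ n, genFun x (S n) ≤ c) : genFun x (⋃ n, S n) ≤ c := by
  classical
  rw [genFun, ENNReal.tsum_eq_iSup_sum]
  refine iSup_le fun F => ?_
  obtain ⟨n, hn⟩ : ∃ n, ∀ l ∈ F, (l : List α) ∈ S n := by
    choose k hk using fun l : ↥(⋃ n, S n) => Set.mem_iUnion.1 l.2
    exact ⟨F.sup k, fun l hl => hS (Finset.le_sup hl) (hk l)⟩
  calc ∑ l ∈ F, x ^ l.1.length
      = ∑ l ∈ (F.map (Function.Embedding.subtype _)).subtype (· ∈ S n), x ^ l.1.length := by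
        rw [Finset.sum_subtype_of_mem (f := fun l : List α => x ^ l.length) (by simpa using hn)]
        simp
    _ ≤ genFun x (S n) := ENNReal.sum_le_tsum _
    _ ≤ c := h n

theorem exists_genFun_tail_lt {c : ℝ≥0∞} (hc : 0 < c) (hS : genFun x S ≠ ∞) :
    ∃ T, 0 < T ∧ genFun x {l ∈ S | T < l.length} < c := by
  obtain ⟨F, hF⟩ := ((ENNReal.tendsto_tsum_compl_atTop_zero hS).eventually_lt_const hc).exists
  refine ⟨F.sup (fun l => l.1.length) + 1, by omega, lt_of_le_of_lt ?_ hF⟩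
  have h : ∀ l : {l ∈ S | F.sup (fun l => l.1.length) + 1 < l.length},
      (⟨l.1, l.2.1⟩ : S) ∉ F := fun l hl => by
    have := Finset.le_sup (f := fun l : S => l.1.length) hl
    have := l.2.2
    dsimp only at *
    omega
  exact ENNReal.tsum_comp_le_tsum_of_injective (f := fun l => (⟨⟨l.1, l.2.1⟩, h l⟩ : {l // l ∉ F}))
    (fun l l' hl => Subtype.ext (congr_arg (fun l => l.1.1) hl)) fun l => x ^ l.1.1.length

theorem genFun_le_div_pow_mul {n : ℕ} (hxy : x ≤ y) (hy : y ≠ 0) (hy' : y ≠ ∞)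
    (h : ∀ l ∈ S, n ≤ l.length) : genFun x S ≤ (x / y) ^ n * genFun y S := by
  rw [genFun, genFun, ← ENNReal.tsum_mul_left]
  refine ENNReal.tsum_le_tsum fun l => ?_
  calc x ^ l.1.length = (x / y) ^ l.1.length * y ^ l.1.length := by
        rw [← mul_pow, ENNReal.div_mul_cancel hy hy']
    _ ≤ (x / y) ^ n * y ^ l.1.length := by
        gcongr ?_ * _
        exact pow_le_pow_right_of_le_one' (ENNReal.div_le_of_le_mul (by simpa using hxy)) (h _ l.2)

theorem genFun_saws {V : Type*} {G : SimpleGraph V} [G.LocallyFinite] (v : V) (x : ℝ≥0∞) :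
    genFun x (saws G v) = x * ∑' n, (sawCount G v n : ℝ≥0∞) * x ^ n := by
  rw [genFun, ← ENNReal.tsum_fiberwise _ fun l : saws G v => l.1.length - 1,
    ← ENNReal.tsum_mul_left]
  refine tsum_congr fun n => ?_
  have hlen : ∀ l : saws G v, l.1.length = n + 1 ↔ l.1.length - 1 = n := fun l => by
    have := length_pos_of_mem_saws l.2; omega
  let e : ((fun l : saws G v => l.1.length - 1) ⁻¹' {n}) ≃ {l ∈ saws G v | l.length = n + 1} :=
    ⟨fun l => ⟨l.1.1, l.1.2, (hlen _).2 l.2⟩, fun l => ⟨⟨l.1, l.2.1⟩, (hlen ⟨l.1, l.2.1⟩).1 l.2.2⟩,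
      fun _ => rfl, fun _ => rfl⟩
  have := (finite_saws_length (G := G) v n).to_subtype
  rw [← e.symm.tsum_eq, tsum_congr fun l => congr_arg (x ^ ·) l.2.2, ENNReal.tsum_const,
    ENat.card_eq_coe_natCard, Nat.card_coe_set_eq, ENat.toENNReal_coe, sawCount_eq_ncard,
    pow_succ', mul_left_comm]

end GenFun

/-! ### Winding of lattice paths -/

/-- `u` and `v` are nearest neighbours on the square lattice. -/
def UnitStep (u v : ℤ × ℤ) : Prop :=
  (v.2 = u.2 ∧ (v.1 = u.1 + 1 ∨ v.1 = u.1 - 1)) ∨ (v.1 = u.1 ∧ (v.2 = u.2 + 1 ∨ v.2 = u.2 - 1))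

/-- The angle, in eighths of a turn, swept about `z` by the unit step from `u` to `v`: the sign
vectors of `u - z` and `v - z` lie in neighbouring octant directions, and their cross product is
the change of octant. -/
def sweep (z u v : ℤ × ℤ) : ℤ :=
  (u.1 - z.1).sign * (v.2 - z.2).sign - (u.2 - z.2).sign * (v.1 - z.1).sign

/-- The angle, in eighths of a turn, swept about `z` along a path whose tip is the head of the
list. -/
def winding (z : ℤ × ℤ) : List (ℤ × ℤ) → ℤ
  | v :: u :: l => sweep z u v + winding z (u :: l)
  | _ => 0

/-- The turning, in eighths of a turn, between the consecutive unit steps `p → v` and `v → u`. -/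
def turn (p v u : ℤ × ℤ) : ℤ := sweep u p v + sweep p v u

/-- The total turning of a path whose tip is the head of the list. -/
def totalTurn : List (ℤ × ℤ) → ℤ
  | u :: v :: p :: l => turn p v u + totalTurn (v :: p :: l)
  | _ => 0

theorem UnitStep.symm {u v : ℤ × ℤ} (h : UnitStep u v) : UnitStep v u := by
  unfold UnitStep at *; omega

theorem sweep_swap (z u v : ℤ × ℤ) : sweep z v u = -sweep z u v := by
  unfold sweep; ring

@[simp] theorem sweep_self_left (z v : ℤ × ℤ) : sweep z z v = 0 := by simp [sweep]

@[simp] theorem sweep_self_right (z u : ℤ × ℤ) : sweep z u z = 0 := by simp [sweep]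

theorem sign_eq_ite (a : ℤ) : a.sign = if 0 < a then 1 else if a < 0 then -1 else 0 := by
  split_ifs <;> grind

theorem sweep_right (z u : ℤ × ℤ) : sweep z u (u.1 + 1, u.2) =
    if u.1 = z.1 ∨ u.1 + 1 = z.1 then -(u.2 - z.2).sign else 0 := by
  simp only [sweep, sign_eq_ite]
  split_ifs <;> omega

theorem sweep_up (z u : ℤ × ℤ) : sweep z u (u.1, u.2 + 1) =
    if u.2 = z.2 ∨ u.2 + 1 = z.2 then (u.1 - z.1).sign else 0 := by
  simp only [sweep, sign_eq_ite]
  split_ifs <;> omega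

theorem UnitStep.right_or_up {u v : ℤ × ℤ} (h : UnitStep u v) :
    (v = (u.1 + 1, u.2) ∨ v = (u.1, u.2 + 1)) ∨ (u = (v.1 + 1, v.2) ∨ u = (v.1, v.2 + 1)) := by
  simp only [Prod.ext_iff]; unfold UnitStep at h; omega

theorem sweep_add_sweep_of_right_or_up {z z' u v : ℤ × ℤ}
    (hz : z' = (z.1 + 1, z.2) ∨ z' = (z.1, z.2 + 1)) (hv : v = (u.1 + 1, u.2) ∨ v = (u.1, u.2 + 1))
    (h1 : u ≠ z) (h2 : u ≠ z') (h3 : v ≠ z) (h4 : v ≠ z') :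
    sweep z u v + sweep v z z' = sweep u z z' + sweep z' u v := by
  rcases hz with rfl | rfl <;> rcases hv with rfl | rfl <;>
  simp only [sweep_right, sweep_up, ne_eq, Prod.ext_iff, sign_eq_ite] at * <;>
  split_ifs <;> omega

/-- Both sides measure the increment of the angle of `u - z` as both points take their step, in
either order. -/
theorem sweep_add_sweep {z z' u v : ℤ × ℤ} (hz : UnitStep z z') (hu : UnitStep u v)
    (h1 : u ≠ z) (h2 : u ≠ z') (h3 : v ≠ z) (h4 : v ≠ z') :
    sweep z u v + sweep v z z' = sweep u z z' + sweep z' u v := by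
  rcases hz.right_or_up with kz | kz <;> rcases hu.right_or_up with ku | ku
  · exact sweep_add_sweep_of_right_or_up kz ku h1 h2 h3 h4
  · linarith [sweep_add_sweep_of_right_or_up kz ku h3 h4 h1 h2, sweep_swap z u v,
      sweep_swap z' u v]
  · linarith [sweep_add_sweep_of_right_or_up kz ku h2 h1 h4 h3, sweep_swap u z z',
      sweep_swap v z z']
  · linarith [sweep_add_sweep_of_right_or_up kz ku h4 h3 h2 h1, sweep_swap z u v,
      sweep_swap z' u v, sweep_swap u z z', sweep_swap v z z']

theorem winding_cons_cons (z v u : ℤ × ℤ) (l : List (ℤ × ℤ)) :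
    winding z (v :: u :: l) = sweep z u v + winding z (u :: l) := rfl

theorem winding_add_sweep {z z' : ℤ × ℤ} (hz : UnitStep z z') {u a : ℤ × ℤ} {l : List (ℤ × ℤ)}
    (hl : (u :: l).IsChain UnitStep) (ha : (u :: l).getLast? = some a)
    (h : z ∉ u :: l) (h' : z' ∉ u :: l) :
    winding z (u :: l) + sweep u z z' = sweep a z z' + winding z' (u :: l) := by
  induction l generalizing u with
  | nil => simp_all [winding]
  | cons v l ih =>
    rw [List.isChain_cons_cons] at hl
    rw [List.getLast?_cons_cons] at ha
    simp only [List.mem_cons, not_or] at h h' ih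
    have hstep := sweep_add_sweep hz hl.1.symm (Ne.symm h.2.1) (Ne.symm h'.2.1) (Ne.symm h.1)
      (Ne.symm h'.1)
    have hrec := ih hl.2 ha h.2 h'.2
    rw [winding_cons_cons, winding_cons_cons]
    linarith

/-- Hopf's description of the total turning of a simple path: the secant from one end to a moving
point turns from the chord to the tangent at that end. -/
theorem totalTurn_eq_winding_add_winding {u a : ℤ × ℤ} {l : List (ℤ × ℤ)}
    (hl : (u :: l).IsChain UnitStep) (hn : (u :: l).Nodup) (ha : (u :: l).getLast? = some a) :
    totalTurn (u :: l) = winding u (u :: l) + winding a (u :: l) := by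
  induction l generalizing u with
  | nil => simp [totalTurn, winding]
  | cons v l ih =>
    rw [List.isChain_cons_cons] at hl
    rw [List.getLast?_cons_cons] at ha
    rw [List.nodup_cons] at hn
    cases l with
    | nil =>
      obtain rfl : v = a := by simpa using ha
      simp [totalTurn, winding]
    | cons x l =>
      have hturn : totalTurn (u :: v :: x :: l) = turn x v u + totalTurn (v :: x :: l) := rfl
      have hmove := winding_add_sweep hl.1.symm hl.2.tail ha (List.nodup_cons.1 hn.2).1
        (fun h => hn.1 (List.mem_cons_of_mem _ h))
      have hrec := ih hl.2 hn.2 ha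
      simp only [winding_cons_cons, sweep_self_right, turn] at hrec hturn ⊢
      linarith [sweep_swap x v u]

theorem winding_append (z u v : ℤ × ℤ) (l : List (ℤ × ℤ)) :
    winding z (l ++ [v, u]) = winding z (l ++ [v]) + sweep z u v := by
  induction l with
  | nil => simp [winding]
  | cons w l ih =>
    cases l with
    | nil => simp [winding]
    | cons w' l =>
      simp only [List.cons_append, winding_cons_cons] at ih ⊢
      rw [ih, add_assoc]

theorem totalTurn_append (l t : List (ℤ × ℤ)) (a b : ℤ × ℤ) :
    totalTurn (l ++ a :: b :: t) = totalTurn (l ++ [a, b]) + totalTurn (a :: b :: t) := by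
  induction l with
  | nil => simp [totalTurn]
  | cons u l ih =>
    match l with
    | [] => simp [totalTurn]
    | [v] => simp [totalTurn, add_assoc]
    | v :: p :: l =>
      simp only [List.cons_append, totalTurn] at ih ⊢
      rw [ih, add_assoc]

theorem totalTurn_closed {v r q : ℤ × ℤ} {l : List (ℤ × ℤ)}
    (hl : (v :: r :: (l ++ [q, v])).IsChain UnitStep) (hn : (r :: (l ++ [q, v])).Nodup) :
    totalTurn (v :: r :: (l ++ [q, v])) =
      2 * winding v (v :: r :: (l ++ [q, v])) + sweep r v q + sweep q r v := by
  rw [List.isChain_cons_cons] at hl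
  have hlast : (r :: (l ++ [q, v])).getLast? = some v := by simp [List.getLast?_cons]
  have hopf := totalTurn_eq_winding_add_winding hl.2 hn hlast
  have hr := winding_append r v q l
  have hv := winding_append v v q l
  rw [List.nodup_cons] at hn
  rw [show l ++ [q, v] = (l ++ [q]) ++ [v] by simp] at hl hn
  obtain ⟨x, m, hx⟩ : ∃ x m, l ++ [q] = x :: m := List.exists_cons_of_ne_nil (by simp)
  have hlast' : (x :: m).getLast? = some q := by simp [← hx]
  have hm : l ++ [q, v] = x :: (m ++ [v]) := by
    rw [← List.cons_append, ← hx]; simp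
  rw [hx] at hl hn hr hv
  have hmove := winding_add_sweep hl.1.symm hl.2.tail.left_of_append hlast'
    (fun h => hn.1 (List.mem_append_left _ h))
    (fun h => List.disjoint_of_nodup_append hn.2 h (by simp))
  simp only [hm, totalTurn, winding_cons_cons, turn, sweep_self_left, sweep_self_right]
    at hopf hr hv ⊢
  linarith [sweep_swap x v r]

theorem winding_closed_eq {v : ℤ × ℤ} {c : List (ℤ × ℤ)} (hc : (v :: c).IsChain UnitStep)
    (hv : (v :: c).getLast? = some v) {z a : ℤ × ℤ} {t : List (ℤ × ℤ)}
    (ht : (z :: t).IsChain UnitStep) (ha : (z :: t).getLast? = some a)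
    (hd : (z :: t).Disjoint (v :: c)) : winding z (v :: c) = winding a (v :: c) := by
  induction t generalizing z with
  | nil => simp_all
  | cons y t ih =>
    rw [List.isChain_cons_cons] at ht
    rw [List.getLast?_cons_cons] at ha
    rw [List.disjoint_cons_left] at hd
    rw [← ih ht.2 ha hd.2]
    linarith [winding_add_sweep ht.1 hc hv hd.1 (List.disjoint_cons_left.1 hd.2).1]

theorem winding_eq_sub_of_potential {z : ℤ × ℤ} (f : ℤ × ℤ → ℤ) (P : ℤ × ℤ → Prop)
    (hright : ∀ w, P w → P (w.1 + 1, w.2) → sweep z w (w.1 + 1, w.2) = f (w.1 + 1, w.2) - f w)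
    (hup : ∀ w, P w → P (w.1, w.2 + 1) → sweep z w (w.1, w.2 + 1) = f (w.1, w.2 + 1) - f w)
    {u a : ℤ × ℤ} {l : List (ℤ × ℤ)} (hl : (u :: l).IsChain UnitStep)
    (ha : (u :: l).getLast? = some a) (hP : ∀ w ∈ u :: l, P w) :
    winding z (u :: l) = f u - f a := by
  have hstep : ∀ v w, UnitStep v w → P v → P w → sweep z v w = f w - f v := by
    intro v w hvw hv hw
    rcases hvw.right_or_up with (rfl | rfl) | (rfl | rfl)
    · exact hright _ hv hw
    · exact hup _ hv hw
    · linarith [hright _ hw hv, sweep_swap z w (w.1 + 1, w.2)]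
    · linarith [hup _ hw hv, sweep_swap z w (w.1, w.2 + 1)]
  induction l generalizing u with
  | nil => simp_all [winding]
  | cons v l ih =>
    rw [List.isChain_cons_cons] at hl
    rw [List.getLast?_cons_cons] at ha
    rw [List.forall_mem_cons] at hP
    rw [winding_cons_cons, ih hl.2 ha hP.2, hstep v u hl.1.symm (hP.2 v (by simp)) hP.1]
    ring

section HalfPlane

variable {z u a : ℤ × ℤ} {l : List (ℤ × ℤ)} (hl : (u :: l).IsChain UnitStep)
  (ha : (u :: l).getLast? = some a)
include hl ha

theorem winding_of_above (h : ∀ w ∈ u :: l, z.2 ≤ w.2 ∧ w ≠ z) :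
    winding z (u :: l) =
      (2 - (a.2 - z.2).sign) * (a.1 - z.1).sign - (2 - (u.2 - z.2).sign) * (u.1 - z.1).sign := by
  rw [winding_eq_sub_of_potential (fun w => -((2 - (w.2 - z.2).sign) * (w.1 - z.1).sign))
    (fun w => z.2 ≤ w.2 ∧ w ≠ z) _ _ hl ha h]
  · ring
  all_goals
    intro w h1 h2
    simp only [sweep_right, sweep_up, sign_eq_ite, ne_eq, Prod.ext_iff] at h1 h2 ⊢
    split_ifs <;> omega

theorem winding_of_below (h : ∀ w ∈ u :: l, w.2 < z.2) :
    winding z (u :: l) = (u.1 - z.1).sign - (a.1 - z.1).sign := by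
  refine winding_eq_sub_of_potential (fun w => (w.1 - z.1).sign) (fun w => w.2 < z.2)
    ?_ ?_ hl ha h <;>
  · intro w h1 h2
    simp only [sweep_right, sweep_up, sign_eq_ite] at h1 h2 ⊢
    split_ifs <;> omega

theorem winding_of_left (h : ∀ w ∈ u :: l, w.1 < z.1) :
    winding z (u :: l) = (a.2 - z.2).sign - (u.2 - z.2).sign := by
  rw [winding_eq_sub_of_potential (fun w => -(w.2 - z.2).sign) (fun w => w.1 < z.1) _ _ hl ha h]
  · ring
  all_goals
    intro w h1 h2
    simp only [sweep_right, sweep_up, sign_eq_ite] at h1 h2 ⊢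
    split_ifs <;> omega

theorem winding_of_right (h : ∀ w ∈ u :: l, z.1 < w.1) :
    winding z (u :: l) = (u.2 - z.2).sign - (a.2 - z.2).sign := by
  refine winding_eq_sub_of_potential (fun w => (w.2 - z.2).sign) (fun w => z.1 < w.1)
    ?_ ?_ hl ha h <;>
  · intro w h1 h2
    simp only [sweep_right, sweep_up, sign_eq_ite] at h1 h2 ⊢
    split_ifs <;> omega

end HalfPlane

/-! ### The phase of a walk on the hexagonal lattice -/

/-- The ordinate difference between `v` and its neighbour along the vertical edge at `v`. -/
def vertStep (v : ℤ × ℤ) : ℤ := if (v.1 + v.2) % 2 = 0 then 1 else -1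

theorem vertStep_eq_one_or (v : ℤ × ℤ) : vertStep v = 1 ∨ vertStep v = -1 := by
  unfold vertStep; split_ifs <;> simp

theorem hexLattice_adj {v u : ℤ × ℤ} : hexLattice.Adj v u ↔
    u = (v.1 + 1, v.2) ∨ u = (v.1 - 1, v.2) ∨ u = (v.1, v.2 + vertStep v) := by
  obtain ⟨a, b⟩ := v
  obtain ⟨c, d⟩ := u
  simp only [hexLattice, SimpleGraph.fromRel_adj, vertStep, ne_eq, Prod.mk.injEq,
    abs_eq (zero_le_one' ℤ), Int.even_iff, min_def]
  split_ifs <;> omega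

theorem vertStep_of_adj {v u : ℤ × ℤ} (h : hexLattice.Adj v u) : vertStep u = -vertStep v := by
  rcases hexLattice_adj.1 h with rfl | rfl | rfl <;> unfold vertStep <;> split_ifs <;> omega

theorem unitStep_of_adj {v u : ℤ × ℤ} (h : hexLattice.Adj v u) : UnitStep v u := by
  have hs := vertStep_eq_one_or v
  rcases hexLattice_adj.1 h with rfl | rfl | rfl <;> unfold UnitStep <;> dsimp only <;> omega

theorem isChain_unitStep {l : List (ℤ × ℤ)} (hl : l.IsChain hexLattice.Adj) :
    l.IsChain UnitStep := hl.imp fun _ _ => unitStep_of_adj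

theorem exists_two_other_neighbors {v p : ℤ × ℤ} (h : hexLattice.Adj v p) :
    ∃ q r, q ≠ r ∧ ∀ s, hexLattice.Adj v s ∧ s ≠ p ↔ s = q ∨ s = r := by
  simp only [hexLattice_adj]
  rcases hexLattice_adj.1 h with rfl | rfl | rfl
  · refine ⟨(v.1 - 1, v.2), (v.1, v.2 + vertStep v), ?_, fun s => ?_⟩ <;>
      simp only [ne_eq, Prod.ext_iff] <;> omega
  · refine ⟨(v.1 + 1, v.2), (v.1, v.2 + vertStep v), ?_, fun s => ?_⟩ <;>
      simp only [ne_eq, Prod.ext_iff] <;> omega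
  · refine ⟨(v.1 + 1, v.2), (v.1 - 1, v.2), ?_, fun s => ?_⟩ <;>
      simp only [ne_eq, Prod.ext_iff] <;> omega

/-- The angle, in units of `π / 12`, from the edge `p → v` of the brick wall to the same edge of the
regular hexagonal lattice. -/
def correction (p v : ℤ × ℤ) : ℤ := 2 * vertStep p * (p.1 - v.1)

/-- The winding, in units of `π / 12`, of a walk drawn on the regular hexagonal lattice, whose tip
is the head of the list and whose first step is vertical. -/
def phase : List (ℤ × ℤ) → ℤ
  | u :: v :: l => 3 * totalTurn (u :: v :: l) + correction v u
  | _ => 0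

/-- The change of phase when a walk that ends with the step `p → v` moves on to `u`. -/
def phaseStep (p v u : ℤ × ℤ) : ℤ := 3 * turn p v u + correction v u - correction p v

/-- The change of phase when a walk that ends with the step `p → v` goes round a loop that leaves
`v` to `q` and returns from `r`, without encircling `p`. -/
def loopPhase (p q r v : ℤ × ℤ) : ℤ :=
  3 * (turn p v q + 2 * (sweep r p v - sweep p r v - sweep p v q - sweep q p v)
    + sweep r v q + sweep q r v) + correction r v - correction p v

theorem phase_cons (u v p : ℤ × ℤ) (l : List (ℤ × ℤ)) :
    phase (u :: v :: p :: l) = phase (v :: p :: l) + phaseStep p v u := by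
  simp only [phase, totalTurn, phaseStep]; ring

section Neighbors

variable {p q r v : ℤ × ℤ} (hp : hexLattice.Adj v p) (hq : hexLattice.Adj v q)
  (hr : hexLattice.Adj v r) (hpq : p ≠ q) (hpr : p ≠ r) (hqr : q ≠ r)
include hp hq hr hpq hpr hqr

theorem phaseStep_eq_four_or :
    phaseStep p v q = 4 ∧ phaseStep p v r = -4 ∨ phaseStep p v q = -4 ∧ phaseStep p v r = 4 := by
  have hvp := vertStep_of_adj hp
  rcases vertStep_eq_one_or v with hs | hs <;>
  rcases hexLattice_adj.1 hp with rfl | rfl | rfl <;>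
  rcases hexLattice_adj.1 hq with rfl | rfl | rfl <;>
  rcases hexLattice_adj.1 hr with rfl | rfl | rfl <;>
  simp_all [phaseStep, turn, sweep, correction]

theorem loopPhase_eq_sixteen_or :
    loopPhase p q r v = 16 ∧ loopPhase p r q v = -16 ∨
      loopPhase p q r v = -16 ∧ loopPhase p r q v = 16 := by
  have hvp := vertStep_of_adj hp
  have hvq := vertStep_of_adj hq
  have hvr := vertStep_of_adj hr
  rcases vertStep_eq_one_or v with hs | hs <;>
  rcases hexLattice_adj.1 hp with rfl | rfl | rfl <;>
  rcases hexLattice_adj.1 hq with rfl | rfl | rfl <;>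
  rcases hexLattice_adj.1 hr with rfl | rfl | rfl <;>
  simp_all [loopPhase, turn, sweep, correction]

end Neighbors

theorem winding_closed_eq_zero {v p : ℤ × ℤ} {c t : List (ℤ × ℤ)}
    (hc : (v :: c).IsChain UnitStep) (hv : (v :: c).getLast? = some v)
    (hpos : ∀ w ∈ v :: c, 0 < w.2) (ht : (p :: t).IsChain UnitStep)
    (h0 : (p :: t).getLast? = some (0, 0)) (hd : (p :: t).Disjoint (v :: c)) :
    winding p (v :: c) = 0 := by
  rw [winding_closed_eq hc hv ht h0 hd, winding_of_above hc hv fun w hw =>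
    ⟨(hpos w hw).le, fun h => by simpa [h] using hpos w hw⟩]
  ring

/-- The loop does not wind around `p`, which determines its winding number around `v`. -/
theorem phase_loop {v r q p : ℤ × ℤ} {l t : List (ℤ × ℤ)}
    (hc : (v :: r :: (l ++ q :: v :: p :: t)).IsChain UnitStep)
    (hn : (r :: (l ++ q :: v :: p :: t)).Nodup) (ht : (p :: t).getLast? = some (0, 0))
    (hpos : ∀ w ∈ r :: (l ++ [q, v]), 0 < w.2) :
    phase (v :: r :: (l ++ q :: v :: p :: t)) = phase (v :: p :: t) + loopPhase p q r v := by
  have hc' : ((v :: r :: (l ++ [q, v])) ++ p :: t).IsChain UnitStep := by simpa using hc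
  have hn' : ((r :: (l ++ [q, v])) ++ p :: t).Nodup := by simpa using hn
  have hloop := hc'.left_of_append
  have hdisj : (p :: t).Disjoint (r :: (l ++ [q, v])) :=
    (List.disjoint_of_nodup_append hn').symm
  have hsub : v :: r :: (l ++ [q, v]) ⊆ r :: (l ++ [q, v]) := by simp
  have hpv : UnitStep p v := by
    have htail : ((v :: r :: (l ++ [q])) ++ v :: p :: t).IsChain UnitStep := by simpa using hc
    exact (List.isChain_cons_cons.1 htail.right_of_append).1.symm
  have hlast : (v :: r :: (l ++ [q, v])).getLast? = some v := by simp [List.getLast?_cons]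
  have hzero := winding_closed_eq_zero hloop hlast (fun w hw => hpos w (hsub hw))
    hc'.right_of_append ht (fun w hw hw' => hdisj hw (hsub hw'))
  have hrq : ((r :: (l ++ [q])) ++ [v]).IsChain UnitStep := by simpa using hloop.tail
  have hnrq : ((r :: (l ++ [q])) ++ [v]).Nodup := by simpa using hn'.of_append_left
  have hmove := winding_add_sweep hpv hrq.left_of_append
    (show (r :: (l ++ [q])).getLast? = some q by simp [List.getLast?_cons])
    (fun h => hdisj (List.mem_cons_self ..) (by
      simpa using List.mem_append_left [v] h))
    (fun h => List.disjoint_of_nodup_append hnrq h (by simp))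
  have hturn := totalTurn_closed hloop hn'.of_append_left
  have happ : totalTurn (v :: r :: (l ++ q :: v :: p :: t)) =
      totalTurn (v :: r :: (l ++ [q, v])) + (turn p v q + totalTurn (v :: p :: t)) :=
    totalTurn_append (v :: r :: l) (p :: t) q v
  have hwp := winding_append p v q (v :: r :: l)
  have hwv := winding_append v v q (v :: r :: l)
  simp only [List.cons_append, winding_cons_cons, sweep_self_left, sweep_self_right]
    at hwp hwv hzero hturn hmove
  simp only [phase, happ, loopPhase]
  linarith

section Exits

variable {u h : ℤ × ℤ} {l : List (ℤ × ℤ)} (hc : (u :: h :: (l ++ [(0, 0)])).IsChain UnitStep)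
  (hn : (u :: h :: (l ++ [(0, 0)])).Nodup) (hlast : (h :: l).getLast? = some (0, 1))
  (hpos : ∀ w ∈ h :: l, 0 < w.2)
include hc hn hlast hpos

theorem phase_of_nonneg (hu : 0 ≤ u.2) : phase (u :: h :: (l ++ [(0, 0)])) =
    3 * (winding u (h :: (l ++ [(0, 0)])) - (2 - u.2.sign) * u.1.sign) + correction h u := by
  have hopf := totalTurn_eq_winding_add_winding (a := (0, 0)) hc hn (by simp [List.getLast?_cons])
  obtain ⟨m, hm⟩ : ∃ m, u :: h :: l = m ++ [(0, 1)] :=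
    List.getLast?_eq_some_iff.1 (by rwa [List.getLast?_cons_cons])
  have horigin : winding (0, 0) (u :: h :: (l ++ [(0, 0)])) = -((2 - u.2.sign) * u.1.sign) := by
    have hne : ∀ w ∈ u :: h :: l, (0 : ℤ) ≤ w.2 ∧ w ≠ (0, 0) := by
      intro w hw
      have hn' : ((u :: h :: l) ++ [(0, 0)]).Nodup := by simpa using hn
      refine ⟨?_, fun h0 => List.disjoint_of_nodup_append hn' hw (by simp [h0])⟩
      rcases List.mem_cons.1 hw with rfl | hw
      exacts [hu, (hpos w hw).le]
    have happ := winding_append (0, 0) (0, 0) (0, 1) m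
    have habove := winding_of_above (z := (0, 0)) (a := (0, 1))
      (hc.left_of_append (l₁ := u :: h :: l)) (by rwa [List.getLast?_cons_cons]) hne
    rw [← List.cons_append, ← List.cons_append, hm, List.append_assoc, List.singleton_append, happ,
      ← hm, habove]
    simp
  rw [horigin, winding_cons_cons] at hopf
  simp only [phase, hopf, sweep_self_right]
  ring

theorem phase_of_top (hu : ∀ w ∈ h :: l, w.2 < u.2) : phase (u :: h :: (l ++ [(0, 0)])) = 0 := by
  have hstep : u.2 = h.2 + 1 ∧ u.1 = h.1 := by
    have := (List.isChain_cons_cons.1 hc).1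
    have := hu h (by simp)
    unfold UnitStep at *; omega
  have hu2 : 0 < u.2 := (hpos h (by simp)).trans (hu h (by simp))
  rw [phase_of_nonneg hc hn hlast hpos hu2.le,
    winding_of_below (a := (0, 0)) hc.tail (by simp [List.getLast?_cons])]
  · simp [correction, hstep.2, Int.sign_eq_one_of_pos hu2]
  · intro w hw
    rcases List.mem_append.1 (by simpa using hw : w ∈ h :: l ++ [(0, 0)]) with hw | hw
    exacts [hu w hw, by simp_all]

theorem phase_of_bottom (hu : u.2 = 0) :
    phase (u :: h :: (l ++ [(0, 0)])) = 12 ∨ phase (u :: h :: (l ++ [(0, 0)])) = -12 := by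
  have hstep : h.2 = 1 ∧ h.1 = u.1 := by
    have := (List.isChain_cons_cons.1 hc).1
    have := hpos h (by simp)
    unfold UnitStep at *; omega
  have hu1 : u.1 ≠ 0 := by
    intro h0
    exact (List.nodup_cons.1 hn).1 (by simp [Prod.ext_iff, hu, h0])
  rw [phase_of_nonneg hc hn hlast hpos hu.ge,
    winding_of_above (a := (0, 0)) hc.tail (by simp [List.getLast?_cons])]
  · simp only [correction, hstep, hu, sign_eq_ite]
    split_ifs <;> omega
  · intro w hw
    refine ⟨?_, fun h0 => (List.nodup_cons.1 hn).1 (h0 ▸ hw)⟩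
    rcases List.mem_append.1 (by simpa using hw : w ∈ h :: l ++ [(0, 0)]) with hw | hw
    exacts [hu ▸ (hpos w hw).le, by simp_all]

theorem phase_of_right (hu1 : 0 < u.1) (hu : ∀ w ∈ h :: l, w.1 < u.1) :
    phase (u :: h :: (l ++ [(0, 0)])) = -4 ∨ phase (u :: h :: (l ++ [(0, 0)])) = -8 := by
  have hstep : u.2 = h.2 ∧ u.1 = h.1 + 1 := by
    have := (List.isChain_cons_cons.1 hc).1
    have := hu h (by simp)
    unfold UnitStep at *; omega
  have hu2 : 0 < u.2 := hstep.1 ▸ hpos h (by simp)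
  rw [phase_of_nonneg hc hn hlast hpos hu2.le,
    winding_of_left (a := (0, 0)) hc.tail (by simp [List.getLast?_cons])]
  · simp only [correction, hstep, sign_eq_ite]
    rcases vertStep_eq_one_or h with hs | hs <;> rw [hs] <;> split_ifs <;> omega
  · intro w hw
    rcases List.mem_append.1 (by simpa using hw : w ∈ h :: l ++ [(0, 0)]) with hw | hw
    exacts [hu w hw, by simp_all]

theorem phase_of_left (hu1 : u.1 < 0) (hu : ∀ w ∈ h :: l, u.1 < w.1) :
    phase (u :: h :: (l ++ [(0, 0)])) = 4 ∨ phase (u :: h :: (l ++ [(0, 0)])) = 8 := by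
  have hstep : u.2 = h.2 ∧ u.1 = h.1 - 1 := by
    have := (List.isChain_cons_cons.1 hc).1
    have := hu h (by simp)
    unfold UnitStep at *; omega
  have hu2 : 0 < u.2 := hstep.1 ▸ hpos h (by simp)
  rw [phase_of_nonneg hc hn hlast hpos hu2.le,
    winding_of_right (a := (0, 0)) hc.tail (by simp [List.getLast?_cons])]
  · simp only [correction, hstep, sign_eq_ite]
    rcases vertStep_eq_one_or h with hs | hs <;> rw [hs] <;> split_ifs <;> omega
  · intro w hw
    rcases List.mem_append.1 (by simpa using hw : w ∈ h :: l ++ [(0, 0)]) with hw | hw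
    exacts [hu w hw, by simp_all]

end Exits

/-! ### The parafermionic observable -/

/-- The critical fugacity `1 / √(2 + √2)`. -/
noncomputable def xc : ℝ≥0 := ((2 * Real.cos (Real.pi / 8)).toNNReal)⁻¹

theorem coe_xc_inv : (xc : ℝ)⁻¹ = 2 * Real.cos (Real.pi / 8) := by
  have : 0 < Real.cos (Real.pi / 8) :=
    Real.cos_pos_of_mem_Ioo ⟨by linarith [Real.pi_pos], by linarith [Real.pi_pos]⟩
  rw [xc, NNReal.coe_inv, inv_inv, Real.coe_toNNReal _ (by positivity)]

theorem coe_xc_inv_eq_sqrt : (xc : ℝ)⁻¹ = √(2 + √2) := by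
  rw [coe_xc_inv, Real.cos_pi_div_eight]; ring

theorem xc_pos : 0 < xc := by
  rw [← NNReal.coe_pos, ← inv_pos, coe_xc_inv_eq_sqrt]; positivity

/-- The contribution to the observable of a walk started by the step from `(0, 0)` to `(0, 1)`,
given without its root `(0, 0)`: the real part of `xc ^ ℓ * exp (i (1 - σ) W)`, where `W` is the
winding and `σ = 5 / 8`. The factor `exp (-i σ W)` is the one of the parafermionic observable, and
`exp (i W)` is the direction of the last step, by which it is multiplied in contour sums. -/
noncomputable def obsTerm (e : List (ℤ × ℤ)) : ℝ :=
  xc ^ e.length * Real.cos (Real.pi * phase (e ++ [(0, 0)]) / 32)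

theorem abs_obsTerm_le (e : List (ℤ × ℤ)) : |obsTerm e| ≤ (xc : ℝ) ^ e.length := by
  rw [obsTerm, abs_mul, abs_of_nonneg (by positivity)]
  exact mul_le_of_le_one_right (by positivity) (Real.abs_cos_le_one _)

theorem summable_subtype_mono {α : Type*} {f : α → ℝ} {s t : Set α} (h : s ⊆ t)
    (hf : Summable fun a : t => f a) : Summable fun a : s => f a :=
  hf.comp_injective (Set.inclusion_injective h)

section Domain

variable {D : Set (ℤ × ℤ)}

/-- The self-avoiding walks from `(0, 1)` that stay in the domain `D`. -/
def walks (D : Set (ℤ × ℤ)) : Set (List (ℤ × ℤ)) :=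
  {w ∈ saws hexLattice (0, 1) | ∀ z ∈ w, z ∈ D}

/-- The walks from `(0, 1)` in `D` prolonged by a step out of `D`, to a vertex other than
`(0, 0)`. -/
def exits (D : Set (ℤ × ℤ)) : Set (List (ℤ × ℤ)) :=
  {e ∈ saws hexLattice (0, 1) | (0, 0) ∉ e ∧ ∃ u ∉ D, ∃ w ∈ walks D, e = u :: w}

/-- The walks in `D` prolonged by a step that does not reverse the last one, where the walks are
considered to start with the step from `(0, 0)` to `(0, 1)`. -/
def extensions (D : Set (ℤ × ℤ)) : Set (List (ℤ × ℤ)) :=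
  {e | e.tail ∈ walks D ∧ (e ++ [(0, 0)]).IsChain hexLattice.Adj ∧ (e ++ [(0, 0)])[2]? ≠ e[0]?}

/-- The walks in `D` prolonged by a step that closes a loop. -/
def loops (D : Set (ℤ × ℤ)) : Set (List (ℤ × ℤ)) :=
  {e | ∃ v r l q t, e = v :: r :: (l ++ q :: v :: t) ∧ e.IsChain hexLattice.Adj ∧
    e.tail ∈ walks D}

theorem isChain_append_origin {w : List (ℤ × ℤ)} (hc : w.IsChain hexLattice.Adj)
    (hlast : w.getLast? = some (0, 1)) : (w ++ [(0, 0)]).IsChain hexLattice.Adj := by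
  refine List.isChain_append.2 ⟨hc, .singleton _, ?_⟩
  simp [hlast, hexLattice_adj, vertStep]

theorem exists_append_origin_eq {w : List (ℤ × ℤ)} (hw : w ∈ walks D) :
    ∃ v w' p t, w = v :: w' ∧ w' ++ [(0, 0)] = p :: t ∧ v ∈ D ∧ hexLattice.Adj v p := by
  have hchain := isChain_append_origin hw.1.1 hw.1.2.2
  obtain _ | ⟨v, w'⟩ := w
  · simpa using hw.1.2.2
  obtain ⟨p, t, hpt⟩ := List.exists_cons_of_ne_nil (List.append_ne_nil_of_right_ne_nil w'
    (List.cons_ne_nil (0, 0) []))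
  refine ⟨v, w', p, t, rfl, hpt, hw.2 v (List.mem_cons_self ..), ?_⟩
  rw [List.cons_append, hpt] at hchain
  exact (List.isChain_cons_cons.1 hchain).1

theorem cons_mem_extensions {u v p : ℤ × ℤ} {w t : List (ℤ × ℤ)} (hw : v :: w ∈ walks D)
    (hpt : w ++ [(0, 0)] = p :: t) : u :: v :: w ∈ extensions D ↔ hexLattice.Adj v u ∧ u ≠ p := by
  have hchain := isChain_append_origin hw.1.1 hw.1.2.2
  rw [List.cons_append, hpt] at hchain
  simp only [extensions, Set.mem_ofPred_eq, List.tail_cons, hw, List.cons_append, hpt,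
    List.isChain_cons_cons, hchain, SimpleGraph.adj_comm _ u v]
  simp [eq_comm]

/-- The local relation at the tip: `2 * xc * cos (π / 8) = 1`. -/
theorem exists_two_extensions {w : List (ℤ × ℤ)} (hw : w ∈ walks D) :
    ∃ q r, q ≠ r ∧ (∀ u, u :: w ∈ extensions D ↔ u = q ∨ u = r) ∧
      obsTerm (q :: w) + obsTerm (r :: w) = obsTerm w := by
  obtain ⟨v, w', p, t, rfl, hpt, -, hp⟩ := exists_append_origin_eq hw
  obtain ⟨q, r, hqr, hall⟩ := exists_two_other_neighbors hp
  refine ⟨q, r, hqr, fun u => (cons_mem_extensions hw hpt).trans (hall u), ?_⟩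
  · obtain ⟨hq, hqp⟩ := (hall q).2 (.inl rfl)
    obtain ⟨hr, hrp⟩ := (hall r).2 (.inr rfl)
    have hx : (xc : ℝ) * (2 * Real.cos (Real.pi / 8)) = 1 := by
      rw [← coe_xc_inv, mul_inv_cancel₀ (by exact_mod_cast xc_pos.ne')]
    have hcos : ∀ k : ℤ, Real.cos (Real.pi * (k + 4 : ℤ) / 32) +
        Real.cos (Real.pi * (k + -4 : ℤ) / 32) =
          2 * Real.cos (Real.pi / 8) * Real.cos (Real.pi * k / 32) := fun k => by
      rw [Real.cos_add_cos]; push_cast; ring_nf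
    simp only [obsTerm, List.cons_append, hpt, phase_cons, List.length_cons]
    rcases phaseStep_eq_four_or hp hq hr hqp.symm hrp.symm hqr with ⟨h4, h4'⟩ | ⟨h4', h4⟩ <;>
    · rw [h4, h4']
      linear_combination xc ^ (w'.length + 1 + 1) * hcos (phase (v :: p :: t)) +
        xc ^ (w'.length + 1) * Real.cos (Real.pi * phase (v :: p :: t) / 32) * hx

/-- The walk that follows the loop at the tip of a walk in the opposite direction. -/
def flipLoop : List (ℤ × ℤ) → List (ℤ × ℤ)
  | [] => []
  | v :: l => v :: ((l.takeWhile (· ≠ v)).reverse ++ l.dropWhile (· ≠ v))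

theorem flipLoop_append {v r q : ℤ × ℤ} {l t : List (ℤ × ℤ)}
    (hn : (r :: (l ++ q :: v :: t)).Nodup) :
    flipLoop (v :: r :: (l ++ q :: v :: t)) = v :: q :: (l.reverse ++ r :: v :: t) := by
  have hn' : ((r :: (l ++ [q])) ++ v :: t).Nodup := by simpa using hn
  have hv : ∀ w ∈ r :: (l ++ [q]), decide (w ≠ v) = true := fun w hw =>
    decide_eq_true fun h => List.disjoint_of_nodup_append hn' hw (by simp [h])
  have hsplit : r :: (l ++ q :: v :: t) = (r :: (l ++ [q])) ++ v :: t := by simp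
  rw [flipLoop, hsplit, List.takeWhile_append_of_pos hv, List.dropWhile_append_of_pos hv]
  simp

theorem reverse_loop {v r q : ℤ × ℤ} {l t : List (ℤ × ℤ)}
    (hc : (v :: r :: (l ++ q :: v :: t)).IsChain hexLattice.Adj)
    (hw : r :: (l ++ q :: v :: t) ∈ walks D) :
    (v :: q :: (l.reverse ++ r :: v :: t)).IsChain hexLattice.Adj ∧
      q :: (l.reverse ++ r :: v :: t) ∈ walks D := by
  have hperm : (q :: (l.reverse ++ r :: v :: t)).Perm (r :: (l ++ q :: v :: t)) := by
    simpa using (List.reverse_perm (r :: (l ++ [q]))).append_right (v :: t)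
  have hc' : ((v :: r :: (l ++ [q])) ++ v :: t).IsChain hexLattice.Adj := by simpa using hc
  obtain ⟨hloop, hrest⟩ := List.isChain_split.1 hc'
  have hrev : ((v :: q :: (l.reverse ++ [r])) ++ [v]).IsChain hexLattice.Adj := by
    have := List.isChain_reverse.2 (hloop.imp fun _ _ h => h.symm)
    simpa using this
  have hchain : (v :: q :: (l.reverse ++ r :: v :: t)).IsChain hexLattice.Adj := by
    simpa using List.isChain_split.2 ⟨hrev, hrest⟩
  refine ⟨hchain, ⟨hchain.tail, hperm.nodup_iff.2 hw.1.2.1, ?_⟩,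
    fun z hz => hw.2 z (hperm.mem_iff.1 hz)⟩
  simpa [List.getLast?_cons, List.getLast?_append] using hw.1.2.2

theorem flipLoop_mem_loops {e : List (ℤ × ℤ)} (he : e ∈ loops D) :
    flipLoop e ∈ loops D ∧ flipLoop (flipLoop e) = e := by
  obtain ⟨v, r, l, q, t, rfl, hc, hw⟩ := he
  obtain ⟨hc', hw'⟩ := reverse_loop hc hw
  rw [flipLoop_append hw.1.2.1]
  exact ⟨⟨v, q, l.reverse, r, t, rfl, hc', hw'⟩,
    by rw [flipLoop_append hw'.1.2.1, List.reverse_reverse]⟩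

theorem cons_mem_extensions_of_mem_saws {u : ℤ × ℤ} {w : List (ℤ × ℤ)} (hw : w ∈ walks D)
    (he : u :: w ∈ saws hexLattice (0, 1)) (h0 : (0, 0) ∉ u :: w) : u :: w ∈ extensions D := by
  obtain ⟨v, w', p, t, rfl, hpt, -, -⟩ := exists_append_origin_eq hw
  refine (cons_mem_extensions hw hpt).2 ⟨(List.isChain_cons_cons.1 he.1).1.symm, ?_⟩
  rintro rfl
  have hmem : u ∈ w' ++ [(0, 0)] := by simp [hpt]
  rcases List.mem_append.1 hmem with h | h
  · exact (List.nodup_cons.1 he.2.1).1 (List.mem_cons_of_mem _ h)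
  · exact h0 (by simp_all)

theorem hasSum_obsTerm_extensions (hs : Summable fun w : walks D => (xc : ℝ) ^ w.1.length) :
    HasSum (fun e : extensions D => obsTerm e) (∑' w : walks D, obsTerm w) := by
  choose q r hqr hext hsum using fun w : walks D => exists_two_extensions w.2
  have hinj : ∀ f : walks D → ℤ × ℤ, Function.Injective fun w : walks D => f w :: w.1 :=
    fun f w w' h => Subtype.ext (List.cons.inj h).2
  have hsummable : ∀ f : walks D → ℤ × ℤ, Summable fun w : walks D => obsTerm (f w :: w.1) :=
    fun f => (hs.mul_left (xc : ℝ)).of_norm_bounded fun w => by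
      simpa [pow_succ'] using abs_obsTerm_le (f w :: w.1)
  have hunion : extensions D =
      Set.range (fun w : walks D => q w :: w.1) ∪ Set.range fun w : walks D => r w :: w.1 := by
    ext (_ | ⟨u, w⟩)
    · simpa using fun h : [] ∈ extensions D => by simpa using h.1.1.2.2
    · simp only [Set.mem_union, Set.mem_range, List.cons.injEq]
      refine ⟨fun h => ?_, ?_⟩
      · exact ((hext ⟨w, h.1⟩ u).1 h).imp (fun hq => ⟨⟨w, h.1⟩, hq.symm, rfl⟩)
          fun hr => ⟨⟨w, h.1⟩, hr.symm, rfl⟩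
      · rintro (⟨w, rfl, rfl⟩ | ⟨w, rfl, rfl⟩)
        exacts [(hext w _).2 (.inl rfl), (hext w _).2 (.inr rfl)]
  have hdisj : Disjoint (Set.range fun w : walks D => q w :: w.1)
      (Set.range fun w : walks D => r w :: w.1) := by
    rw [Set.disjoint_left]
    rintro _ ⟨w, rfl⟩ ⟨w', h⟩
    obtain ⟨h, hw⟩ := List.cons.inj h
    rw [Subtype.ext hw] at h
    exact hqr w h.symm
  rw [hunion]
  convert HasSum.add_disjoint (f := obsTerm) hdisj
    ((hinj q).hasSum_range_iff.2 (hsummable q).hasSum)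
    ((hinj r).hasSum_range_iff.2 (hsummable r).hasSum) using 1
  · rfl
  rw [← (hsummable q).tsum_add (hsummable r)]
  exact tsum_congr fun w => (hsum w).symm

theorem disjoint_exits_walks : Disjoint (exits D) (walks D) := by
  rw [Set.disjoint_left]
  rintro _ ⟨-, -, u, hu, w, -, rfl⟩ h
  exact hu (h.2 u (List.mem_cons_self ..))

theorem not_nodup_of_mem_loops {e : List (ℤ × ℤ)} (he : e ∈ loops D) : ¬ e.Nodup := by
  obtain ⟨v, r, l, q, t, rfl, -, -⟩ := he
  simp

theorem summable_pow_length (hs : genFun xc (walks D) ≠ ∞) :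
    Summable fun w : walks D => (xc : ℝ) ^ w.1.length := by
  simp_rw [genFun, ← ENNReal.coe_pow, ENNReal.tsum_coe_ne_top_iff_summable] at hs
  exact_mod_cast hs

theorem tsum_obsTerm_walks (h1 : (0, 1) ∈ D)
    (hs : Summable fun e : ↥(walks D \ {[(0, 1)]}) => obsTerm e) :
    ∑' w : walks D, obsTerm w = ∑' e : ↥(walks D \ {[(0, 1)]}), obsTerm e + xc := by
  have hroot : [(0, 1)] ∈ walks D := ⟨singleton_mem_saws, by simpa using h1⟩
  have hF : obsTerm [(0, 1)] = xc := by simp [obsTerm, phase, totalTurn, correction]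
  conv_lhs => rw [← Set.sdiff_union_of_subset (Set.singleton_subset_iff.2 hroot)]
  rw [Summable.tsum_union_disjoint Set.disjoint_sdiff_left hs
    (hasSum_singleton _ obsTerm).summable, tsum_singleton _ obsTerm, hF]

variable (hD : ∀ z ∈ D, 0 < z.2)
include hD

theorem nodup_append_origin {w : List (ℤ × ℤ)} (hw : w ∈ walks D) :
    (w ++ [(0, 0)]).Nodup := by
  refine List.nodup_append_comm.1 (List.nodup_cons.2 ⟨fun h => ?_, hw.1.2.1⟩)
  simpa using hD _ (hw.2 _ h)

theorem phase_append_origin_of_loop {v r q p : ℤ × ℤ} {l t t' : List (ℤ × ℤ)}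
    (hc : (v :: r :: (l ++ q :: v :: t)).IsChain hexLattice.Adj)
    (hw : r :: (l ++ q :: v :: t) ∈ walks D) (ht : t ++ [(0, 0)] = p :: t') :
    phase ((v :: r :: (l ++ q :: v :: t)) ++ [(0, 0)]) =
      phase (v :: p :: t') + loopPhase p q r v := by
  have hn := nodup_append_origin hD hw
  have hlast : (v :: r :: (l ++ q :: v :: t)).getLast? = some (0, 1) := by
    rw [List.getLast?_cons_cons]; exact hw.1.2.2
  have hchain := isChain_unitStep (isChain_append_origin hc hlast)
  simp only [List.cons_append, List.append_assoc, ht] at hn hchain ⊢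
  refine phase_loop hchain hn (by rw [← ht]; simp) fun w hw' => hD w (hw.2 w ?_)
  simp only [List.mem_cons, List.mem_append, List.not_mem_nil, or_false] at hw' ⊢
  tauto

theorem obsTerm_flipLoop {e : List (ℤ × ℤ)} (he : e ∈ loops D) :
    obsTerm (flipLoop e) = -obsTerm e := by
  obtain ⟨v, r, l, q, t, rfl, hc, hw⟩ := he
  rw [List.tail_cons] at hw
  obtain ⟨hc', hw'⟩ := reverse_loop hc hw
  have htail : v :: t ∈ walks D :=
    ⟨right_mem_saws (s := r :: (l ++ [q])) (by simpa using hw.1), fun z hz => hw.2 z (by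
      simp only [List.mem_cons, List.mem_append] at hz ⊢; tauto)⟩
  obtain ⟨v, t, p, t', ⟨rfl, rfl⟩, ht, -, hp⟩ := exists_append_origin_eq htail
  have hq := (List.isChain_cons_cons.1 hc').1
  have hr := (List.isChain_cons_cons.1 hc).1
  have hn : (r :: (l ++ q :: v :: (t ++ [(0, 0)]))).Nodup := by
    simpa using nodup_append_origin hD hw
  rw [ht] at hn
  have hpq : p ≠ q := by rintro rfl; simp [List.nodup_append] at hn
  have hpr : p ≠ r := by rintro rfl; simp [List.nodup_append] at hn
  have hqr : q ≠ r := by rintro rfl; simp [List.nodup_append] at hn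
  have hcos : ∀ k : ℤ, Real.cos (Real.pi * (k + -16 : ℤ) / 32) =
      -Real.cos (Real.pi * (k + 16 : ℤ) / 32) := fun k => by
    rw [← Real.cos_sub_pi]; push_cast; ring_nf
  rw [flipLoop_append hw.1.2.1]
  simp only [obsTerm, phase_append_origin_of_loop hD hc hw ht,
    phase_append_origin_of_loop hD hc' hw' ht]
  rw [show (v :: q :: (l.reverse ++ r :: v :: t)).length = (v :: r :: (l ++ q :: v :: t)).length by
    simp]
  rcases loopPhase_eq_sixteen_or hp hq hr hpq hpr hqr with ⟨h, h'⟩ | ⟨h', h⟩ <;>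
    rw [h, h', hcos] <;> ring

theorem tsum_obsTerm_loops : ∑' e : loops D, obsTerm e = 0 := by
  let φ : Function.End (loops D) := fun e => ⟨flipLoop e, (flipLoop_mem_loops e.2).1⟩
  have hφ : Function.Involutive φ := fun e => Subtype.ext (flipLoop_mem_loops e.2).2
  have h : ∑' e : loops D, obsTerm (φ e) = ∑' e : loops D, obsTerm e :=
    hφ.toPerm.tsum_eq fun e : loops D => obsTerm e
  have h' : ∑' e : loops D, obsTerm (φ e) = -∑' e : loops D, obsTerm e := by
    rw [← tsum_neg]
    exact tsum_congr fun e => obsTerm_flipLoop hD e.2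
  linarith

theorem origin_cons_notMem_extensions (w : List (ℤ × ℤ)) :
    (0, 0) :: w ∉ extensions D := fun he => by
  have hw : w ∈ walks D := he.1
  obtain ⟨v, w', p, t, rfl, hpt, hv, -⟩ := exists_append_origin_eq hw
  obtain ⟨hadj, hp⟩ := (cons_mem_extensions hw hpt).1 he
  have hv0 := hD v hv
  obtain rfl : v = (0, 1) := by
    rcases hexLattice_adj.1 hadj.symm with rfl | rfl | rfl <;> simp_all [vertStep]
  have hnil : w' = [] := by
    by_contra hne
    have hlast := hw.1.2.2
    rw [List.getLast?_cons, List.getLast?_eq_some_getLast hne] at hlast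
    exact (List.nodup_cons.1 hw.1.2.1).1 (Option.some.inj hlast ▸ List.getLast_mem hne)
  simp_all

theorem mem_of_mem_extensions {e : List (ℤ × ℤ)} (he : e ∈ extensions D) :
    e ∈ exits D ∨ e ∈ loops D ∨ e ∈ walks D \ {[(0, 1)]} := by
  obtain _ | ⟨u, w⟩ := e
  · simpa using he.1.1.2.2
  have hw : w ∈ walks D := he.1
  obtain ⟨v, w', p, t, rfl, hpt, -, -⟩ := exists_append_origin_eq hw
  obtain ⟨hadj, hup⟩ := (cons_mem_extensions hw hpt).1 he
  by_cases hmem : u ∈ v :: w'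
  · obtain ⟨s, t', hs⟩ := List.append_of_mem hmem
    obtain _ | ⟨r, s⟩ := s
    · exact absurd (List.cons.inj hs).1 hadj.ne
    obtain ⟨rfl, hs⟩ := List.cons.inj hs
    rcases List.eq_nil_or_concat s with rfl | ⟨l, q, rfl⟩
    · simp_all
    refine .inr (.inl ⟨u, v, l, q, t', by simp [hs], ?_, hw⟩)
    exact List.isChain_cons_cons.2 ⟨hadj.symm, hw.1.1⟩
  have hsaw := cons_mem_saws hw.1 hadj.symm hmem
  by_cases hu : u ∈ D
  · exact .inr (.inr ⟨⟨hsaw, List.forall_mem_cons.2 ⟨hu, hw.2⟩⟩, by simp⟩)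
  · refine .inl ⟨hsaw, fun h0 => ?_, u, hu, _, hw, rfl⟩
    rcases List.mem_cons.1 h0 with rfl | h0
    · exact origin_cons_notMem_extensions hD _ he
    · simpa using hD _ (hw.2 _ h0)

theorem extensions_eq : extensions D = exits D ∪ loops D ∪ (walks D \ {[(0, 1)]}) := by
  ext e
  rw [Set.mem_union, Set.mem_union, or_assoc]
  refine ⟨mem_of_mem_extensions hD, ?_⟩
  rintro (⟨he, h0, u, -, w, hw, rfl⟩ | ⟨v, r, l, q, t, rfl, hc, hw⟩ | ⟨he, hne⟩)
  · exact cons_mem_extensions_of_mem_saws hw he h0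
  · refine ⟨hw, isChain_append_origin hc ?_, ?_⟩
    · rw [List.getLast?_cons_cons]; exact hw.1.2.2
    · have hn := hw.1.2.1
      cases l <;> rintro h <;> simp_all
  · obtain _ | ⟨u, w⟩ := e
    · simpa using he.1.2.2
    obtain _ | ⟨z, w⟩ := w
    · exact absurd (by simpa using he.1.2.2) hne
    refine cons_mem_extensions_of_mem_saws ⟨right_mem_saws (s := [u]) he.1, fun z hz =>
      he.2 z (List.mem_cons_of_mem _ hz)⟩ he.1 fun h => by simpa using hD _ (he.2 _ h)

theorem hasSum_obsTerm_union (hs : genFun xc (walks D) ≠ ∞) :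
    HasSum (fun e : ↥(exits D ∪ loops D ∪ (walks D \ {[(0, 1)]})) => obsTerm e)
      (∑' w : walks D, obsTerm w) := by
  rw [← extensions_eq hD]
  exact hasSum_obsTerm_extensions (summable_pow_length hs)

/-- Loops cancel in pairs, so that only the trivial walk and the exits are left in the telescoped
sum of the local relations. -/
theorem hasSum_obsTerm_exits (h1 : (0, 1) ∈ D) (hs : genFun xc (walks D) ≠ ∞) :
    HasSum (fun e : exits D => obsTerm e) (xc : ℝ) := by
  have hext := hasSum_obsTerm_union hD hs
  have hsub : ∀ S ⊆ exits D ∪ loops D ∪ (walks D \ {[(0, 1)]}),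
      Summable (obsTerm ∘ ((↑) : S → List (ℤ × ℤ))) :=
    fun S h => summable_subtype_mono h hext.summable
  have hexits := hsub (exits D) (Set.subset_union_left.trans Set.subset_union_left)
  have hloops := hsub (loops D) (Set.subset_union_right.trans Set.subset_union_left)
  have hsteps := hsub (walks D \ {[(0, 1)]}) Set.subset_union_right
  have hdisj : Disjoint (exits D ∪ loops D) (walks D \ {[(0, 1)]}) :=
    (disjoint_exits_walks.union_left (Set.disjoint_left.2 fun e he hw =>
      not_nodup_of_mem_loops he hw.1.2.1)).mono_right Set.sdiff_subset
  have hdisj' : Disjoint (exits D) (loops D) :=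
    Set.disjoint_left.2 fun e he hl => not_nodup_of_mem_loops hl he.1.2.1
  have hsum := hext.tsum_eq
  rw [Summable.tsum_union_disjoint hdisj (hsub _ Set.subset_union_left) hsteps,
    Summable.tsum_union_disjoint hdisj' hexits hloops, tsum_obsTerm_loops hD,
    tsum_obsTerm_walks h1 hsteps] at hsum
  have hexits_sum : ∑' e : exits D, obsTerm e = xc := by linarith
  exact hexits_sum ▸ hexits.hasSum

end Domain

/-! ### The boundary of half-planes, strips and rectangles -/

/-- The upper half-plane. -/
def halfPlane : Set (ℤ × ℤ) := {z | 0 < z.2}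

/-- The horizontal strip formed by the rows `1, …, T`. -/
def strip (T : ℕ) : Set (ℤ × ℤ) := {z | 0 < z.2 ∧ z.2 ≤ T}

/-- The part of the strip `strip T` at horizontal distance at most `L` from the root. -/
def rect (T L : ℕ) : Set (ℤ × ℤ) := {z | z ∈ strip T ∧ |z.1| ≤ L}

/-- The walks that leave the domain `D` for a vertex of row `r`. -/
def exitsAt (D : Set (ℤ × ℤ)) (r : ℤ) : Set (List (ℤ × ℤ)) :=
  {e ∈ exits D | e.head?.map Prod.snd = some r}

/-- The walks that cross the strip `strip T` and leave it through its upper side. -/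
def topExits (T : ℕ) : Set (List (ℤ × ℤ)) := exitsAt (strip T) (T + 1)

/-- The weight `cos (3 π / 8)` with which the exits through row `0` enter the real part of the
observable. -/
noncomputable def bottomWeight : ℝ≥0 := (Real.cos (3 * Real.pi / 8)).toNNReal

theorem coe_bottomWeight : (bottomWeight : ℝ) = Real.cos (3 * Real.pi / 8) :=
  Real.coe_toNNReal _ (Real.cos_nonneg_of_neg_pi_div_two_le_of_le
    (by linarith [Real.pi_pos]) (by linarith [Real.pi_pos]))

theorem bottomWeight_le_one : bottomWeight ≤ 1 := by
  rw [← NNReal.coe_le_coe, coe_bottomWeight]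
  exact Real.cos_le_one _

section Weights

variable {D : Set (ℤ × ℤ)} {e w : List (ℤ × ℤ)} {u : ℤ × ℤ}

theorem obsTerm_nonneg (h : |phase (e ++ [(0, 0)])| ≤ 16) : 0 ≤ obsTerm e := by
  obtain ⟨h1, h2⟩ := abs_le.1 h
  have h1' : (-16 : ℝ) ≤ phase (e ++ [(0, 0)]) := by exact_mod_cast h1
  have h2' : (phase (e ++ [(0, 0)]) : ℝ) ≤ 16 := by exact_mod_cast h2
  refine mul_nonneg (by positivity) (Real.cos_nonneg_of_neg_pi_div_two_le_of_le ?_ ?_) <;>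
  nlinarith [Real.pi_pos]

theorem exists_of_mem_exits (he : u :: w ∈ exits D) :
    ∃ h l, w = h :: l ∧ hexLattice.Adj h u ∧ u ∉ D ∧ (∀ z ∈ h :: l, z ∈ D) ∧
      (u :: h :: (l ++ [(0, 0)])).IsChain UnitStep ∧ (u :: h :: (l ++ [(0, 0)])).Nodup ∧
      (h :: l).getLast? = some (0, 1) := by
  obtain ⟨he, h0, _, hu, w, hw, heq⟩ := he
  obtain ⟨rfl, rfl⟩ := List.cons.inj heq
  obtain _ | ⟨h, l⟩ := w
  · simpa using hw.1.2.2
  refine ⟨h, l, rfl, (List.isChain_cons_cons.1 he.1).1.symm, hu, hw.2,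
    isChain_unitStep (isChain_append_origin he.1 he.2.2),
    List.nodup_append_comm (l₁ := [(0, 0)]).1 (List.nodup_cons.2 ⟨h0, he.2.1⟩), hw.1.2.2⟩

variable (hD : ∀ z ∈ D, 0 < z.2) (he : u :: w ∈ exits D)
include hD he

theorem phase_exit_of_bottom (hu : u.2 = 0) :
    phase (u :: w ++ [(0, 0)]) = 12 ∨ phase (u :: w ++ [(0, 0)]) = -12 := by
  obtain ⟨h, l, rfl, -, -, hl, hc, hn, hlast⟩ := exists_of_mem_exits he
  exact phase_of_bottom hc hn hlast (fun z hz => hD z (hl z hz)) hu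

theorem phase_exit_of_top (hu : ∀ z ∈ D, z.2 < u.2) : phase (u :: w ++ [(0, 0)]) = 0 := by
  obtain ⟨h, l, rfl, -, -, hl, hc, hn, hlast⟩ := exists_of_mem_exits he
  exact phase_of_top hc hn hlast (fun z hz => hD z (hl z hz)) fun z hz => hu z (hl z hz)

theorem obsTerm_of_bottom (hu : u.2 = 0) :
    obsTerm (u :: w) = bottomWeight * xc ^ (u :: w).length := by
  rw [obsTerm, coe_bottomWeight, mul_comm]
  congr 1
  rcases phase_exit_of_bottom hD he hu with h | h <;> rw [h]
  · congr 1; push_cast; ring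
  · rw [← Real.cos_neg]; congr 1; push_cast; ring

theorem obsTerm_of_top (hu : ∀ z ∈ D, z.2 < u.2) : obsTerm (u :: w) = xc ^ (u :: w).length := by
  rw [obsTerm, phase_exit_of_top hD he hu]
  simp

end Weights

theorem tsum_ofReal_obsTerm_exits {D : Set (ℤ × ℤ)} (hD : ∀ z ∈ D, 0 < z.2) (h1 : (0, 1) ∈ D)
    (hs : genFun xc (walks D) ≠ ∞) (h0 : ∀ e ∈ exits D, 0 ≤ obsTerm e) :
    ∑' e : exits D, ENNReal.ofReal (obsTerm e) = xc := by
  have h := hasSum_obsTerm_exits hD h1 hs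
  rw [← ENNReal.ofReal_tsum_of_nonneg (fun e => h0 _ e.2) h.summable, h.tsum_eq,
    ENNReal.ofReal_coe_nnreal]

theorem tsum_ofReal_obsTerm_of_forall_eq {c : ℝ≥0} {S : Set (List (ℤ × ℤ))}
    (h : ∀ e ∈ S, obsTerm e = c * xc ^ e.length) :
    ∑' e : S, ENNReal.ofReal (obsTerm e) = c * genFun xc S := by
  rw [genFun, ← ENNReal.tsum_mul_left]
  refine tsum_congr fun e => ?_
  rw [h e e.2]
  exact_mod_cast ENNReal.ofReal_coe_nnreal

theorem exists_cons_of_mem_exits {D : Set (ℤ × ℤ)} {e : List (ℤ × ℤ)} (he : e ∈ exits D) :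
    ∃ u w, e = u :: w := by
  obtain ⟨-, -, u, -, w, -, rfl⟩ := he
  exact ⟨u, w, rfl⟩

theorem pos_of_mem_strip {T : ℕ} : ∀ z ∈ strip T, 0 < z.2 := fun _ h => h.1

theorem pos_of_mem_rect {T L : ℕ} : ∀ z ∈ rect T L, 0 < z.2 := fun _ h => h.1.1

theorem bottomWeight_mul_genFun_exits_halfPlane (hs : genFun xc (walks halfPlane) ≠ ∞) :
    bottomWeight * genFun xc (exits halfPlane) = xc := by
  have hterm : ∀ e ∈ exits halfPlane, obsTerm e = bottomWeight * xc ^ e.length := by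
    intro e he
    obtain ⟨u, w, rfl⟩ := exists_cons_of_mem_exits he
    obtain ⟨h, l, -, hadj, hu, hl, -⟩ := exists_of_mem_exits he
    refine obsTerm_of_bottom (fun _ h => h) he ?_
    have hh := hl h (List.mem_cons_self ..)
    have hstep := unitStep_of_adj hadj
    change ¬0 < u.2 at hu
    change 0 < h.2 at hh
    unfold UnitStep at hstep
    omega
  rw [← tsum_ofReal_obsTerm_of_forall_eq hterm]
  refine tsum_ofReal_obsTerm_exits (fun _ h => h) (by simp [halfPlane]) hs fun e he => ?_
  rw [hterm e he]
  positivity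

theorem exits_strip {T : ℕ} :
    exits (strip T) = exitsAt (strip T) 0 ∪ exitsAt (strip T) (T + 1) := by
  refine Set.Subset.antisymm (fun e he => ?_) (Set.union_subset (fun _ h => h.1) fun _ h => h.1)
  obtain ⟨u, w, rfl⟩ := exists_cons_of_mem_exits he
  obtain ⟨h, l, -, hadj, hu, hl, -⟩ := exists_of_mem_exits he
  have hstep := unitStep_of_adj hadj
  have hh := hl h (List.mem_cons_self ..)
  have : u.2 = 0 ∨ u.2 = T + 1 := by
    simp only [strip, Set.mem_ofPred_eq] at hu hh
    unfold UnitStep at hstep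
    omega
  exact this.imp (fun h => ⟨he, by simp [h]⟩) fun h => ⟨he, by simp [h]⟩

theorem disjoint_exitsAt {D : Set (ℤ × ℤ)} {r s : ℤ} (h : r ≠ s) :
    Disjoint (exitsAt D r) (exitsAt D s) :=
  Set.disjoint_left.2 fun _ hr hs => h (Option.some_inj.1 (hr.2.symm.trans hs.2))

theorem obsTerm_of_mem_exitsAt_zero {D : Set (ℤ × ℤ)} (hD : ∀ z ∈ D, 0 < z.2)
    {e : List (ℤ × ℤ)} (he : e ∈ exitsAt D 0) : obsTerm e = bottomWeight * xc ^ e.length := by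
  obtain ⟨u, w, rfl⟩ := exists_cons_of_mem_exits he.1
  exact obsTerm_of_bottom hD he.1 (by simpa using he.2)

theorem obsTerm_of_mem_exitsAt_top {D : Set (ℤ × ℤ)} {T : ℕ} (hD : D ⊆ strip T)
    {e : List (ℤ × ℤ)} (he : e ∈ exitsAt D (T + 1)) : obsTerm e = (1 : ℝ≥0) * xc ^ e.length := by
  obtain ⟨u, w, rfl⟩ := exists_cons_of_mem_exits he.1
  have hu : u.2 = T + 1 := by simpa using he.2
  rw [NNReal.coe_one, one_mul]
  refine obsTerm_of_top (fun z hz => (hD hz).1) he.1 fun z hz => ?_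
  have := (hD hz).2
  omega

theorem bottomWeight_mul_genFun_add_genFun_exitsAt_strip {T : ℕ} (hT : 0 < T)
    (hs : genFun xc (walks (strip T)) ≠ ∞) :
    bottomWeight * genFun xc (exitsAt (strip T) 0) + genFun xc (exitsAt (strip T) (T + 1)) =
      xc := by
  have hbottom := fun e => obsTerm_of_mem_exitsAt_zero pos_of_mem_strip (e := e) (D := strip T)
  have htop := fun e => obsTerm_of_mem_exitsAt_top subset_rfl (e := e) (T := T)
  have h1 : (0, 1) ∈ strip T := by simp [strip]; omega
  have hnonneg : ∀ e ∈ exits (strip T), 0 ≤ obsTerm e := by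
    rw [exits_strip]
    rintro e (he | he)
    · rw [hbottom e he]; positivity
    · rw [htop e he]; positivity
  have hsum := tsum_ofReal_obsTerm_exits pos_of_mem_strip h1 hs hnonneg
  rwa [exits_strip, Summable.tsum_union_disjoint (f := fun e => ENNReal.ofReal (obsTerm e))
      (disjoint_exitsAt (by omega)) ENNReal.summable ENNReal.summable,
    tsum_ofReal_obsTerm_of_forall_eq hbottom, tsum_ofReal_obsTerm_of_forall_eq htop,
    ENNReal.coe_one, one_mul] at hsum

theorem finite_walks {D : Set (ℤ × ℤ)} (hD : D.Finite) : (walks D).Finite :=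
  have := hD.to_subtype
  have := Fintype.ofFinite D
  ((Set.finite_range fun l : {l : List D // l.Nodup} => l.1.map (↑))).subset fun w hw => by
    lift w to List D using hw.2
    exact ⟨⟨w, (List.nodup_map_iff Subtype.val_injective).1 hw.1.2.1⟩, rfl⟩

theorem finite_rect (T L : ℕ) : (rect T L).Finite := by
  refine (Set.finite_Icc (-(L : ℤ), (1 : ℤ)) (L, T)).subset fun z hz => ?_
  obtain ⟨⟨h1, h2⟩, h3⟩ := hz
  rw [abs_le] at h3
  exact ⟨⟨h3.1, h1⟩, h3.2, h2⟩

theorem obsTerm_nonneg_of_mem_exits_rect {T L : ℕ} {e : List (ℤ × ℤ)}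
    (he : e ∈ exits (rect T L)) : 0 ≤ obsTerm e := by
  obtain ⟨u, w, rfl⟩ := exists_cons_of_mem_exits he
  obtain ⟨h, l, rfl, hadj, hu, hl, hc, hn, hlast⟩ := exists_of_mem_exits he
  have hpos : ∀ z ∈ h :: l, 0 < z.2 := fun z hz => pos_of_mem_rect z (hl z hz)
  have hdir : u.2 = 0 ∨ u.2 = T + 1 ∨ u.1 = L + 1 ∨ u.1 = -L - 1 := by
    have hstep := unitStep_of_adj hadj
    have hh := hl h (List.mem_cons_self ..)
    simp only [rect, strip, Set.mem_ofPred_eq, abs_le] at hu hh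
    unfold UnitStep at hstep
    omega
  refine obsTerm_nonneg (abs_le.2 ?_)
  simp only [List.cons_append]
  rcases hdir with hu | hu | hu | hu
  · rcases phase_of_bottom hc hn hlast hpos hu with h | h <;> rw [h] <;> norm_num
  · rw [phase_of_top hc hn hlast hpos fun z hz => by have := (hl z hz).1.2; omega]
    norm_num
  · rcases phase_of_right hc hn hlast hpos (by omega)
      fun z hz => by have := (abs_le.1 (hl z hz).2).2; omega with h | h <;> rw [h] <;> norm_num
  · rcases phase_of_left hc hn hlast hpos (by omega)
      fun z hz => by have := (abs_le.1 (hl z hz).2).1; omega with h | h <;> rw [h] <;> norm_num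

theorem genFun_exitsAt_rect_le {T : ℕ} (hT : 0 < T) (L : ℕ) :
    genFun xc (exitsAt (rect T L) (T + 1)) ≤ xc := by
  have htop := fun e => obsTerm_of_mem_exitsAt_top (D := rect T L) (fun _ h => h.1) (e := e)
  have h1 : (0, 1) ∈ rect T L := by simp [rect, strip]; omega
  calc genFun xc (exitsAt (rect T L) (T + 1))
      = ∑' e : exitsAt (rect T L) (T + 1), ENNReal.ofReal (obsTerm e) := by
        rw [tsum_ofReal_obsTerm_of_forall_eq htop, ENNReal.coe_one, one_mul]
    _ ≤ ∑' e : exits (rect T L), ENNReal.ofReal (obsTerm e) :=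
        ENNReal.tsum_mono_subtype (fun e => ENNReal.ofReal (obsTerm e)) fun _ h => h.1
    _ = xc := tsum_ofReal_obsTerm_exits pos_of_mem_rect h1
        (genFun_ne_top_of_finite ENNReal.coe_ne_top (finite_walks (finite_rect T L)))
        fun _ => obsTerm_nonneg_of_mem_exits_rect

theorem abs_sub_lt_length_of_isChain {l : List (ℤ × ℤ)} (hl : l.IsChain UnitStep)
    {a z : ℤ × ℤ} (ha : l.getLast? = some a) (hz : z ∈ l) :
    |z.1 - a.1| < l.length ∧ |z.2 - a.2| < l.length := by
  induction l generalizing z with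
  | nil => simp at hz
  | cons u l ih =>
    obtain _ | ⟨v, l⟩ := l
    · simp_all
    · rw [List.getLast?_cons_cons] at ha
      have hstep := (List.isChain_cons_cons.1 hl).1
      have hv := ih hl.tail ha (List.mem_cons_self ..)
      rw [List.length_cons]
      rcases List.mem_cons.1 hz with rfl | hz
      · unfold UnitStep at hstep
        simp only [abs_lt] at hv ⊢
        omega
      · have := ih hl.tail ha hz
        push_cast
        exact ⟨by linarith, by linarith⟩

theorem genFun_topExits_le {T : ℕ} (hT : 0 < T) : genFun xc (topExits T) ≤ xc := by
  refine (genFun_mono fun e he => ?_).trans (genFun_iUnion_le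
    (S := fun L => exitsAt (rect T L) (T + 1)) (fun L L' hL e he => ?_)
    fun L => genFun_exitsAt_rect_le hT L)
  · obtain ⟨⟨hsaw, h0, u, hu, w, hw, rfl⟩, hr⟩ := he
    refine Set.mem_iUnion.2 ⟨(u :: w).length,
      ⟨hsaw, h0, u, fun h => hu h.1, w, ⟨hw.1, fun z hz => ⟨hw.2 z hz, ?_⟩⟩, rfl⟩, hr⟩
    simpa using (abs_sub_lt_length_of_isChain (isChain_unitStep hsaw.1) hsaw.2.2
      (List.mem_cons_of_mem u hz)).1.le
  · obtain ⟨⟨hsaw, h0, u, -, w, hw, rfl⟩, hr⟩ := he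
    refine ⟨⟨hsaw, h0, u, fun h => ?_, w, ⟨hw.1, fun z hz => ⟨(hw.2 z hz).1, ?_⟩⟩, rfl⟩, hr⟩
    · have : u.2 = T + 1 := by simpa using hr
      have := h.1.2
      omega
    · exact (hw.2 z hz).2.trans (by exact_mod_cast hL)

/-! ### Symmetries of the hexagonal lattice -/

theorem finite_neighborSet_hexLattice (v : ℤ × ℤ) : (hexLattice.neighborSet v).Finite :=
  (Set.toFinite {(v.1 + 1, v.2), (v.1 - 1, v.2), (v.1, v.2 + vertStep v)}).subset fun u hu => by
    simpa using hexLattice_adj.1 hu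

noncomputable instance : hexLattice.LocallyFinite :=
  fun v => (finite_neighborSet_hexLattice v).fintype

/-- The symmetry of the lattice that takes `v` to `w`, as a map on vertices: the translation by
`w - v` if it preserves the parity of `a + b`, and otherwise the point reflection that exchanges
`v` and `w`. -/
def move (v w z : ℤ × ℤ) : ℤ × ℤ :=
  if (v.1 + v.2 + w.1 + w.2) % 2 = 0 then (w.1 + (z.1 - v.1), w.2 + (z.2 - v.2))
  else (w.1 - (z.1 - v.1), w.2 - (z.2 - v.2))

theorem move_move (v w q z : ℤ × ℤ) : move (move w q v) v (move w q z) = z := by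
  by_cases h : (w.1 + w.2 + q.1 + q.2) % 2 = 0
  · have h' : (q.1 + (v.1 - w.1) + (q.2 + (v.2 - w.2)) + v.1 + v.2) % 2 = 0 := by omega
    ext <;> simp [move, h, h']
  · have h' : ¬(q.1 - (v.1 - w.1) + (q.2 - (v.2 - w.2)) + v.1 + v.2) % 2 = 0 := by omega
    ext <;> simp [move, h, h']

theorem move_self_left (v w : ℤ × ℤ) : move v w v = w := by
  unfold move
  split_ifs <;> simp

theorem move_move_self (v w z : ℤ × ℤ) : move w v (move v w z) = z := by
  simpa only [move_self_left] using move_move v v w z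

theorem hexLattice_adj_move {v w z u : ℤ × ℤ} (h : hexLattice.Adj z u) :
    hexLattice.Adj (move v w z) (move v w u) := by
  rw [hexLattice_adj] at h ⊢
  unfold move vertStep at *
  simp only [Prod.ext_iff] at h ⊢
  split_ifs at * <;> dsimp only at * <;> omega

/-- The map `move v w` as an automorphism of the lattice. -/
def moveIso (v w : ℤ × ℤ) : hexLattice ≃g hexLattice where
  toFun := move v w
  invFun := move w v
  left_inv := move_move_self v w
  right_inv := move_move_self w v
  map_rel_iff' {z u} := by
    refine ⟨fun h => ?_, hexLattice_adj_move⟩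
    have h' : hexLattice.Adj (move w v (move v w z)) (move w v (move v w u)) :=
      hexLattice_adj_move h
    rwa [move_move_self, move_move_self] at h'

theorem map_move_mem_saws {v : ℤ × ℤ} {l : List (ℤ × ℤ)} (w : ℤ × ℤ) (hl : l ∈ saws hexLattice v) :
    l.map (move v w) ∈ saws hexLattice w := by
  have h := map_mem_saws (moveIso v w).toEmbedding hl
  rwa [show (moveIso v w).toEmbedding v = w from move_self_left v w] at h

theorem map_move_map_move (v w : ℤ × ℤ) (l : List (ℤ × ℤ)) :
    (l.map (move v w)).map (move w v) = l := by
  simp [Function.comp_def, move_move_self]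

theorem genFun_saws_le_genFun_saws (x : ℝ≥0∞) (v w : ℤ × ℤ) :
    genFun x (saws hexLattice v) ≤ genFun x (saws hexLattice w) := by
  rw [← one_mul (genFun x (saws hexLattice v)), ← pow_zero x]
  exact pow_mul_genFun_le (List.map (move w v)) fun l hl =>
    ⟨l.map (move v w), map_move_mem_saws w hl, map_move_map_move v w l, by simp⟩

/-! ### Divergence at the critical point -/

theorem mul_genFun_le_of_split {x : ℝ≥0∞} {q : ℤ × ℤ} {S A B : Set (List (ℤ × ℤ))}
    (h : ∀ l ∈ S, ∃ s z r, l = s ++ z :: r ∧ z :: r ∈ A ∧ (s ++ [z]).map (move z q) ∈ B) :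
    x * genFun x S ≤ genFun x A * genFun x B := by
  nth_rw 1 [← pow_one x]
  refine pow_mul_genFun_le_mul (fun a b => a.head?.elim []
    fun z => (b.map (move q z)).dropLast ++ a) fun l hl => ?_
  obtain ⟨s, z, r, rfl, hA, hB⟩ := h l hl
  refine ⟨_, hA, _, hB, ?_, by simp; omega⟩
  rw [List.head?_cons, Option.elim_some, map_move_map_move, List.dropLast_concat]

theorem exists_cons_mem_saws_diagonal (T : ℕ) : ∃ t, ((T : ℤ), (T : ℤ) + 1) :: t ∈
    saws hexLattice (0, 1) ∧ ∀ z ∈ t, 0 < z.2 ∧ z.2 ≤ T ∧ z.1 + z.2 ≤ 2 * T := by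
  induction T with
  | zero => exact ⟨[], by simpa using singleton_mem_saws, by simp⟩
  | succ T ih =>
    obtain ⟨t, ht, hmem⟩ := ih
    have hmem' : ∀ z ∈ ((T : ℤ), (T : ℤ) + 1) :: t,
        0 < z.2 ∧ z.2 ≤ T + 1 ∧ z.1 + z.2 ≤ 2 * T + 1 := by
      rintro z (_ | ⟨_, hz⟩)
      · dsimp only; omega
      · have := hmem z hz; omega
    have hnext : ((T : ℤ) + 1, (T : ℤ) + 1) :: ((T : ℤ), (T : ℤ) + 1) :: t ∈
        saws hexLattice (0, 1) := by
      refine cons_mem_saws ht (hexLattice_adj.2 (by simp)) fun h => ?_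
      have := hmem' _ h
      dsimp only at this
      omega
    refine ⟨((T : ℤ) + 1, (T : ℤ) + 1) :: ((T : ℤ), (T : ℤ) + 1) :: t, ?_, ?_⟩
    · push_cast
      refine cons_mem_saws hnext (hexLattice_adj.2 ?_) fun h => ?_
      · simp [vertStep]
        omega
      · rcases List.mem_cons.1 h with h | h
        · simp at h
        · have := hmem' _ h
          dsimp only at this
          omega
    · push_cast
      rintro z (_ | ⟨_, hz⟩)
      · dsimp only; omega
      · have := hmem' z hz; omega

theorem cons_mem_topExits {T : ℕ} (hT : 0 < T) {z : ℤ × ℤ} {r : List (ℤ × ℤ)}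
    (h : z :: r ∈ saws hexLattice (0, 1)) (hz : (T : ℤ) < z.2) (hr : ∀ w ∈ r, w ∈ strip T) :
    z :: r ∈ topExits T := by
  obtain _ | ⟨y, r⟩ := r
  · obtain rfl : z = (0, 1) := by simpa using h.2.2
    dsimp only at hz
    omega
  have hy := (hr y (List.mem_cons_self ..)).2
  have hstep := unitStep_of_adj (List.isChain_cons_cons.1 h.1).1
  refine ⟨⟨h, ?_, z, fun hz' => hz.not_ge hz'.2, _, ⟨right_mem_saws (s := [z]) h, hr⟩, rfl⟩, ?_⟩
  · rintro (_ | ⟨_, h0⟩)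
    · dsimp only at hz; omega
    · exact absurd (hr _ h0).1 (by simp)
  · unfold UnitStep at hstep
    have : z.2 = T + 1 := by omega
    simpa using this

theorem genFun_topExits_pos {T : ℕ} (hT : 0 < T) : 0 < genFun xc (topExits T) := by
  obtain ⟨t, ht, hmem⟩ := exists_cons_mem_saws_diagonal T
  exact (ENNReal.pow_pos (by exact_mod_cast xc_pos) _).trans_le (pow_length_le_genFun
    (cons_mem_topExits hT ht (by simp) fun z hz => ⟨(hmem z hz).1, (hmem z hz).2.1⟩))

theorem xc_mul_genFun_le_genFun_topExits_mul {T : ℕ} (hT : 0 < T) :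
    xc * genFun xc (exits halfPlane \ exitsAt (strip T) 0) ≤
      genFun xc (topExits T) * genFun xc {l ∈ saws hexLattice (0, 1) | T < l.length} := by
  refine mul_genFun_le_of_split (q := (0, 1)) fun e ⟨he, hne⟩ => ?_
  obtain ⟨u, w, rfl⟩ := exists_cons_of_mem_exits he
  obtain ⟨h, l, rfl, hadj, hu, hl, -⟩ := exists_of_mem_exits he
  have hu0 : u.2 = 0 := by
    have hh := hl h (List.mem_cons_self ..)
    have hstep := unitStep_of_adj hadj
    simp only [halfPlane, Set.mem_ofPred_eq] at hu hh
    unfold UnitStep at hstep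
    omega
  have hhigh : ∃ z ∈ u :: h :: l, (T : ℤ) < z.2 := by
    by_contra! hlow
    refine hne ⟨⟨he.1, he.2.1, u, fun h => by have := h.1; omega, h :: l,
      ⟨right_mem_saws (s := [u]) he.1, fun z hz => ⟨hl z hz, hlow z (.tail _ hz)⟩⟩, rfl⟩, ?_⟩
    simpa using hu0
  obtain ⟨s, z, r, heq, hz, hr⟩ := exists_append_cons_of_exists_mem' hhigh
  obtain _ | ⟨u', s⟩ := s
  · obtain ⟨rfl, -⟩ := List.cons.inj heq
    omega
  obtain ⟨rfl, htail⟩ := List.cons.inj heq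
  rw [heq] at he ⊢
  refine ⟨u :: s, z, r, rfl, cons_mem_topExits hT (right_mem_saws he.1) hz fun w hw =>
    ⟨hl w (by simp [htail, hw]), not_lt.1 (hr w hw)⟩, ?_⟩
  have hs := left_mem_saws he.1
  refine ⟨map_move_mem_saws _ hs, ?_⟩
  have hlen := (abs_sub_lt_length_of_isChain (isChain_unitStep hs.1) hs.2.2
    (List.mem_cons_self ..)).2
  rw [abs_lt] at hlen
  rw [List.length_map]
  omega

theorem genFun_saws_xc_eq_top : genFun xc (saws hexLattice (0, 1)) = ∞ := by
  by_contra hfin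
  have hwalks : ∀ D, genFun xc (walks D) ≠ ∞ := fun D =>
    ne_top_of_le_ne_top hfin (genFun_mono fun _ h => h.1)
  obtain ⟨T, hT, htail⟩ := exists_genFun_tail_lt (by exact_mod_cast xc_pos : (0 : ℝ≥0∞) < xc) hfin
  have hhalf := bottomWeight_mul_genFun_exits_halfPlane (hwalks _)
  have hstrip := bottomWeight_mul_genFun_add_genFun_exitsAt_strip hT (hwalks _)
  have hsplit : genFun xc (exits halfPlane) ≤
      genFun xc (exitsAt (strip T) 0) + genFun xc (exits halfPlane \ exitsAt (strip T) 0) :=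
    (genFun_mono fun e he => by by_cases h : e ∈ exitsAt (strip T) 0 <;> simp [h, he]).trans
      genFun_union_le
  set A := genFun xc (exits halfPlane)
  set B := genFun xc (exitsAt (strip T) 0)
  set C := genFun xc (exits halfPlane \ exitsAt (strip T) 0)
  have htop : genFun xc (topExits T) ≤ C := by
    have hB : bottomWeight * B ≠ ∞ := ne_top_of_le_ne_top ENNReal.coe_ne_top
      (hstrip ▸ le_self_add)
    refine (ENNReal.add_le_add_iff_left hB).1 ?_
    calc bottomWeight * B + genFun xc (topExits T) = bottomWeight * A := hstrip.trans hhalf.symm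
      _ ≤ bottomWeight * (B + C) := by gcongr
      _ ≤ bottomWeight * B + C := by
        rw [mul_add]
        gcongr
        exact mul_le_of_le_one_left' (by exact_mod_cast bottomWeight_le_one)
  have hlt : genFun xc (topExits T) * genFun xc {l ∈ saws hexLattice (0, 1) | T < l.length} <
      genFun xc (topExits T) * xc :=
    ENNReal.mul_lt_mul_right (genFun_topExits_pos hT).ne'
      (ne_top_of_le_ne_top ENNReal.coe_ne_top (genFun_topExits_le hT)) htail
  refine hlt.not_ge ?_
  calc genFun xc (topExits T) * xc ≤ xc * C := by rw [mul_comm]; gcongr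
    _ ≤ _ := xc_mul_genFun_le_genFun_topExits_mul hT

/-! ### Convergence below the critical point -/

/-- The last step of the walk, if there is one, is horizontal. -/
def FlatTip (l : List (ℤ × ℤ)) : Prop := ∀ a b r, l = a :: b :: r → a.2 = b.2

/-- The walks in `D` whose last step is horizontal. -/
def flatWalks (D : Set (ℤ × ℤ)) : Set (List (ℤ × ℤ)) := {w ∈ walks D | FlatTip w}

/-- The flat-tipped walks in `strip T`. The empty list is included to account for the empty part of
a decomposition, and the one-vertex walk, which does not lie in `strip 0`, so that the recursion
over `T` can start at `0`. -/
def stripWalks (T : ℕ) : Set (List (ℤ × ℤ)) :=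
  {l | l = [] ∨ l = [(0, 1)] ∨ l ∈ flatWalks (strip T)}

section FlatTip

variable {l r s : List (ℤ × ℤ)} {u v w z : ℤ × ℤ}

theorem FlatTip.of_append (h : FlatTip (s ++ r)) : FlatTip s := by
  rintro a b t rfl
  exact h a b (t ++ r) (by simp)

theorem FlatTip.map_move (h : FlatTip l) : FlatTip (l.map (move v w)) := by
  rintro a b r hl
  obtain _ | ⟨z, _ | ⟨u, l⟩⟩ := l
  · simp at hl
  · simp at hl
  · simp only [List.map_cons, List.cons.injEq] at hl
    rw [← hl.1, ← hl.2.1]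
    unfold move
    split_ifs <;> simp [h z u l rfl]

theorem map_move_mem_flatWalks {D : Set (ℤ × ℤ)} (hl : l ∈ saws hexLattice v) (hflat : FlatTip l)
    (hD : ∀ w ∈ l, move v (0, 1) w ∈ D) : l.map (move v (0, 1)) ∈ flatWalks D :=
  ⟨⟨map_move_mem_saws _ hl, List.forall_mem_map.2 hD⟩, hflat.map_move⟩

theorem eq_of_adj_of_snd_ne (h : hexLattice.Adj v u) (hne : v.2 ≠ u.2) :
    u = (v.1, v.2 + vertStep v) := by
  rcases hexLattice_adj.1 h with rfl | rfl | rfl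
  · exact absurd rfl hne
  · exact absurd rfl hne
  · rfl

theorem eq_or_eq_of_adj_of_snd_eq (h : hexLattice.Adj v u) (heq : v.2 = u.2) :
    u = (v.1 + 1, v.2) ∨ u = (v.1 - 1, v.2) := by
  rcases hexLattice_adj.1 h with h | h | h
  · exact .inl h
  · exact .inr h
  · have := vertStep_eq_one_or v
    rw [h] at heq
    dsimp only at heq
    omega

theorem flatTip_of_cons (h : u :: z :: l ∈ saws hexLattice v) (hne : u.2 ≠ z.2) :
    FlatTip (z :: l) := by
  rintro a b r hl
  obtain ⟨rfl, rfl⟩ := List.cons.inj hl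
  by_contra hne'
  obtain ⟨hu, hb⟩ := List.isChain_cons_cons.1 h.1
  obtain rfl : u = b := by
    rw [eq_of_adj_of_snd_ne hu.symm hne.symm,
      ← eq_of_adj_of_snd_ne (List.isChain_cons_cons.1 hb).1 hne']
  exact (List.nodup_cons.1 h.2.1).1 (by simp)

end FlatTip

section Strip

variable {T : ℕ} {x : ℝ≥0∞} {p z : ℤ × ℤ} {l r s : List (ℤ × ℤ)}

theorem up_cons_mem_topExits (h : p :: r ∈ walks (strip T)) (hp : p.2 = T)
    (heven : (p.1 + p.2) % 2 = 0) : (p.1, p.2 + 1) :: p :: r ∈ topExits T := by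
  have hpos := (h.2 p (List.mem_cons_self ..)).1
  refine cons_mem_topExits (by omega) (cons_mem_saws h.1 (hexLattice_adj.2 ?_) fun hmem => ?_)
    (by dsimp only; omega) h.2
  · have : (p.1 + (p.2 + 1)) % 2 ≠ 0 := by omega
    simp [vertStep, this]
  · have := (h.2 _ hmem).2
    dsimp only at this
    omega

theorem eq_nil_or_eq_append_of_snd_ne (hl : s ++ z :: r ∈ walks (strip (T + 1)))
    (hz : z.2 = T + 1) (hs : ∀ w ∈ s, w.2 ≠ T + 1) :
    s = [] ∨ (z.1 + z.2) % 2 = 1 ∧ ∃ s', s = s' ++ [(z.1, z.2 - 1)] := by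
  obtain rfl | ⟨s, v, rfl⟩ := s.eq_nil_or_concat'
  · exact .inl rfl
  have hadj : hexLattice.Adj v z := by
    have hchain := hl.1.1
    rw [List.append_assoc, List.singleton_append] at hchain
    exact (List.isChain_append_cons_cons.1 hchain).2.1
  have hv : v = (z.1, z.2 + vertStep z) :=
    eq_of_adj_of_snd_ne hadj.symm (by rw [hz]; exact (hs v (by simp)).symm)
  have hle := (hl.2 v (by simp)).2
  have hodd : (z.1 + z.2) % 2 = 1 := by
    by_contra heven
    have : (z.1 + z.2) % 2 = 0 := by omega
    simp only [hv, vertStep, this] at hle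
    push_cast at hle
    omega
  refine .inr ⟨hodd, s, ?_⟩
  rw [hv]
  simp [vertStep, hodd, sub_eq_add_neg]

theorem map_move_mem_stripWalks (hl : s ++ z :: r ∈ flatWalks (strip (T + 1)))
    (hz : z.2 = T + 1) (hs : ∀ w ∈ s, w.2 ≠ T + 1) :
    s.map (move (z.1, z.2 - 1) (0, 1)) ∈ stripWalks T := by
  obtain rfl | ⟨hodd, s, rfl⟩ := eq_nil_or_eq_append_of_snd_ne hl.1 hz hs
  · exact .inl rfl
  have hsaw := hl.1.1
  rw [List.append_assoc] at hsaw
  refine .inr (.inr (map_move_mem_flatWalks (left_mem_saws hsaw) hl.2.of_append fun w hw => ?_))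
  have hw' := hl.1.2 w (List.mem_append_left _ hw)
  have hne := hs w hw
  simp only [strip, Set.mem_ofPred_eq] at hw' ⊢
  unfold move
  split_ifs <;> dsimp only at * <;> omega

theorem snd_eq_of_append_cons_cons_mem_flatWalks
    (hl : s ++ z :: p :: r ∈ flatWalks (strip (T + 1)))
    (hz : z.2 = T + 1) (hs : ∀ w ∈ s, w.2 ≠ T + 1) (hodd : (z.1 + z.2) % 2 = 1) : z.2 = p.2 := by
  obtain rfl | ⟨-, s, rfl⟩ := eq_nil_or_eq_append_of_snd_ne hl.1 hz hs
  · exact hl.2 z p r rfl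
  by_contra hne
  have hadj := (List.isChain_cons_cons.1 (right_mem_saws hl.1.1).1).1
  have hp : p = (z.1, z.2 - 1) := by
    rw [eq_of_adj_of_snd_ne hadj hne]
    simp [vertStep, hodd, sub_eq_add_neg]
  have hnodup := hl.1.1.2.1
  simp [hp, List.nodup_append] at hnodup

theorem stripWalks_succ_cases (hl : l ∈ stripWalks (T + 1)) :
    l ∈ stripWalks T ∨ (∃ u, u :: l ∈ topExits (T + 1)) ∨
      ∃ s z u p r, l = s ++ z :: p :: r ∧ u :: p :: r ∈ topExits (T + 1) ∧
        (z = (p.1 + 1, p.2) ∨ z = (p.1 - 1, p.2)) ∧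
        s.map (move (z.1, z.2 - 1) (0, 1)) ∈ stripWalks T := by
  rcases hl with rfl | rfl | hl
  · exact .inl (.inl rfl)
  · exact .inl (.inr (.inl rfl))
  by_cases htop : ∃ z ∈ l, z.2 = T + 1
  · obtain ⟨s, z, r, rfl, hz, hs⟩ := exists_append_cons_of_exists_mem htop
    have hright : z :: r ∈ walks (strip (T + 1)) :=
      ⟨right_mem_saws hl.1.1, fun w hw => hl.1.2 w (List.mem_append_right _ hw)⟩
    rcases Int.emod_two_eq_zero_or_one (z.1 + z.2) with heven | hodd
    · obtain rfl | ⟨hodd, -⟩ := eq_nil_or_eq_append_of_snd_ne hl.1 hz hs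
      · exact .inr (.inl ⟨_, up_cons_mem_topExits hright (by simpa using hz) heven⟩)
      · omega
    obtain _ | ⟨p, r⟩ := r
    · obtain rfl : z = (0, 1) := by simpa using hright.1.2.2
      obtain rfl | ⟨-, s, rfl⟩ := eq_nil_or_eq_append_of_snd_ne hl.1 hz hs
      · exact .inl (.inr (.inl rfl))
      · exact absurd (hl.1.2 (0, 0) (by simp)).1 (by simp)
    have hp := snd_eq_of_append_cons_cons_mem_flatWalks hl hz hs hodd
    have hz' := eq_or_eq_of_adj_of_snd_eq (List.isChain_cons_cons.1 hright.1.1).1.symm hp.symm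
    refine .inr (.inr ⟨s, z, _, p, r, rfl, up_cons_mem_topExits ⟨right_mem_saws (s := [z]) hright.1,
      fun w hw => hright.2 w (.tail _ hw)⟩ (by rw [← hp, hz]; push_cast; rfl) ?_, hz',
      map_move_mem_stripWalks hl hz hs⟩)
    rcases hz' with rfl | rfl <;> dsimp only at hodd <;> omega
  · push Not at htop
    refine .inl (.inr (.inr ⟨⟨hl.1.1, fun z hz => ⟨(hl.1.2 z hz).1, ?_⟩⟩, hl.2⟩))
    have hle := (hl.1.2 z hz).2
    have hne := htop z hz
    push_cast at hle
    omega

theorem lt_length_of_mem_topExits (hl : l ∈ topExits T) : T < l.length := by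
  obtain ⟨u, w, rfl⟩ := exists_cons_of_mem_exits hl.1
  have hu : u.2 = T + 1 := by simpa using hl.2
  have h := (abs_sub_lt_length_of_isChain (isChain_unitStep hl.1.1.1) hl.1.1.2.2
    (List.mem_cons_self ..)).2
  rw [hu, abs_lt] at h
  dsimp only at h
  omega

theorem genFun_stripWalks_succ_le (hx : x ≠ 0) (hx' : x ≠ ∞) :
    genFun x (stripWalks (T + 1)) ≤ genFun x (stripWalks T) + genFun x (topExits (T + 1)) / x +
      2 * (genFun x (topExits (T + 1)) * genFun x (stripWalks T)) := by
  let glued (d : ℤ) : Set (List (ℤ × ℤ)) := {l | ∃ s p r u, l = s ++ (p.1 + d, p.2) :: p :: r ∧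
    u :: p :: r ∈ topExits (T + 1) ∧ s.map (move (p.1 + d, p.2 - 1) (0, 1)) ∈ stripWalks T}
  have hcover : stripWalks (T + 1) ⊆
      stripWalks T ∪ {l | ∃ u, u :: l ∈ topExits (T + 1)} ∪ (glued 1 ∪ glued (-1)) := by
    intro l hl
    rcases stripWalks_succ_cases hl with h | h | ⟨s, z, u, p, r, rfl, hu, rfl | rfl, hs⟩
    · exact .inl (.inl h)
    · exact .inl (.inr h)
    · exact .inr (.inl ⟨s, p, r, u, rfl, hu, hs⟩)
    · exact .inr (.inr ⟨s, p, r, u, rfl, hu, hs⟩)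
  have htop : genFun x {l | ∃ u, u :: l ∈ topExits (T + 1)} ≤ genFun x (topExits (T + 1)) / x := by
    rw [ENNReal.le_div_iff_mul_le (.inl hx) (.inl hx'), mul_comm]
    nth_rw 1 [← pow_one x]
    exact pow_mul_genFun_le List.tail fun l ⟨u, hu⟩ => ⟨u :: l, hu, rfl, rfl⟩
  have hglued : ∀ d, genFun x (glued d) ≤
      genFun x (topExits (T + 1)) * genFun x (stripWalks T) := fun d => by
    rw [← one_mul (genFun x (glued d)), ← pow_zero x]
    refine pow_mul_genFun_le_mul (fun a b => a.tail.head?.elim [] fun p =>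
      b.map (move (0, 1) (p.1 + d, p.2 - 1)) ++ (p.1 + d, p.2) :: a.tail) ?_
    rintro l ⟨s, p, r, u, rfl, hu, hs⟩
    refine ⟨_, hu, _, hs, ?_, by simp; omega⟩
    rw [List.tail_cons, List.head?_cons, Option.elim_some, map_move_map_move]
  calc genFun x (stripWalks (T + 1))
      ≤ genFun x (stripWalks T) + genFun x {l | ∃ u, u :: l ∈ topExits (T + 1)} +
          (genFun x (glued 1) + genFun x (glued (-1))) :=
        (genFun_mono hcover).trans (genFun_union_le.trans
          (add_le_add genFun_union_le genFun_union_le))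
    _ ≤ _ := by
        rw [two_mul]
        exact add_le_add (add_le_add_right htop _) (add_le_add (hglued _) (hglued _))

theorem xc_lt_one : xc < 1 := by
  have h : (1 : ℝ) < (xc : ℝ)⁻¹ := by
    rw [coe_xc_inv_eq_sqrt]
    exact Real.lt_sqrt_of_sq_lt (by linarith [Real.sqrt_nonneg 2])
  exact_mod_cast (one_lt_inv₀ (by exact_mod_cast xc_pos)).1 h

theorem genFun_topExits_le_pow_mul (hx : x ≤ xc) :
    genFun x (topExits (T + 1)) ≤ (x / xc) ^ T * x := by
  have hxc : (xc : ℝ≥0∞) ≠ 0 := by exact_mod_cast xc_pos.ne'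
  calc genFun x (topExits (T + 1)) ≤ (x / xc) ^ (T + 1) * genFun xc (topExits (T + 1)) :=
        genFun_le_div_pow_mul hx hxc ENNReal.coe_ne_top
          fun l hl => (lt_length_of_mem_topExits hl).le
    _ ≤ (x / xc) ^ (T + 1) * xc := by gcongr; exact genFun_topExits_le T.succ_pos
    _ = (x / xc) ^ T * x := by
        rw [pow_succ, mul_assoc, ENNReal.div_mul_cancel hxc ENNReal.coe_ne_top]

theorem genFun_stripWalks_succ_le_mul (hx : x ≠ 0) (hxc : x ≤ xc) :
    genFun x (stripWalks (T + 1)) ≤ genFun x (stripWalks T) * (1 + 3 * (x / xc) ^ T) := by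
  set V := genFun x (stripWalks T)
  have hx1 : x ≤ 1 := hxc.trans (by exact_mod_cast xc_lt_one.le)
  have hx' : x ≠ ∞ := ne_top_of_le_ne_top ENNReal.one_ne_top hx1
  have hV : 1 ≤ V := by simpa using pow_length_le_genFun (x := x) (S := stripWalks T) (.inl rfl)
  have htop : genFun x (topExits (T + 1)) ≤ (x / xc) ^ T * x := genFun_topExits_le_pow_mul hxc
  calc genFun x (stripWalks (T + 1))
      ≤ V + (x / xc) ^ T * x / x + 2 * ((x / xc) ^ T * x * V) :=
        (genFun_stripWalks_succ_le hx hx').trans (by gcongr)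
    _ ≤ V + (x / xc) ^ T * V + 2 * ((x / xc) ^ T * 1 * V) := by
        rw [ENNReal.mul_div_cancel_right hx hx']
        gcongr
        exact le_mul_of_one_le_right' hV
    _ = V * (1 + 3 * (x / xc) ^ T) := by ring

end Strip

theorem stripWalks_mono : Monotone stripWalks := by
  rintro S T hST l (h | h | h)
  · exact .inl h
  · exact .inr (.inl h)
  · exact .inr (.inr ⟨⟨h.1.1, fun z hz =>
      ⟨(h.1.2 z hz).1, (h.1.2 z hz).2.trans (by exact_mod_cast hST)⟩⟩, h.2⟩)

theorem finite_stripWalks_zero : (stripWalks 0).Finite := by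
  refine (Set.toFinite {[], [(0, 1)]}).subset ?_
  rintro l (h | h | h)
  · exact .inl h
  · exact .inr h
  · have := h.1.2 _ (List.mem_of_getLast? h.1.1.2.2)
    simp [strip] at this

theorem genFun_flatWalks_halfPlane_ne_top {x : ℝ≥0∞} (hx : x ≠ 0) (hxc : x < xc) :
    genFun x (flatWalks halfPlane) ≠ ∞ := by
  have hsum : ∑' n, 3 * (x / xc) ^ n ≠ ∞ := by
    rw [ENNReal.tsum_mul_left, ENNReal.tsum_geometric]
    refine ENNReal.mul_ne_top (by simp) (ENNReal.inv_ne_top.2 (tsub_pos_of_lt ?_).ne')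
    exact ENNReal.div_lt_of_lt_mul (by simpa using hxc)
  obtain ⟨C, hC, hle⟩ := exists_forall_le_of_le_mul_one_add
    (genFun_ne_top_of_finite hxc.ne_top finite_stripWalks_zero) hsum
    fun T => genFun_stripWalks_succ_le_mul hx hxc.le
  refine ne_top_of_le_ne_top hC ((genFun_mono fun l hl => ?_).trans
    (genFun_iUnion_le stripWalks_mono hle))
  refine Set.mem_iUnion.2 ⟨l.length, .inr (.inr ⟨⟨hl.1.1, fun z hz => ⟨hl.1.2 z hz, ?_⟩⟩, hl.2⟩)⟩
  have h := (abs_sub_lt_length_of_isChain (isChain_unitStep hl.1.1.1) hl.1.1.2.2 hz).2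
  rw [abs_lt] at h
  dsimp only at h
  omega

/-- The walks from `v` whose first and last steps are horizontal. -/
def flatSaws (v : ℤ × ℤ) : Set (List (ℤ × ℤ)) :=
  {l ∈ saws hexLattice v | FlatTip l ∧ FlatTip l.reverse}

section FlatSaws

variable {v z : ℤ × ℤ} {x : ℝ≥0∞} {l : List (ℤ × ℤ)}

theorem exists_adj_snd_eq_of_mem_flatSaws (hl : l ∈ flatSaws v) (hne : l ≠ [z]) (hz : z ∈ l) :
    ∃ a ∈ l, hexLattice.Adj z a ∧ a.2 = z.2 := by
  obtain ⟨hsaw, hflat, hflat'⟩ := hl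
  obtain ⟨s, r, rfl⟩ := List.append_of_mem hz
  by_contra! hvert
  have hright : ∀ b r', r = b :: r' → b = (z.1, z.2 + vertStep z) := by
    rintro b r' rfl
    have hb := (List.isChain_cons_cons.1 (right_mem_saws hsaw).1).1
    exact eq_of_adj_of_snd_ne hb (hvert b (by simp) hb).symm
  have hleft : ∀ s' a, s = s' ++ [a] → a = (z.1, z.2 + vertStep z) := by
    rintro s' a rfl
    have hchain := hsaw.1
    rw [List.append_assoc, List.singleton_append] at hchain
    have ha := (List.isChain_append_cons_cons.1 hchain).2.1.symm
    exact eq_of_adj_of_snd_ne ha (hvert a (by simp) ha).symm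
  obtain rfl | ⟨s, a, rfl⟩ := s.eq_nil_or_concat' <;> obtain _ | ⟨b, r⟩ := r
  · exact hne rfl
  · have hb := (List.isChain_cons_cons.1 hsaw.1).1
    exact hvert b (by simp) hb (hflat z b r rfl).symm
  · have hchain := hsaw.1
    rw [List.append_assoc, List.singleton_append] at hchain
    have ha := (List.isChain_append_cons_cons.1 hchain).2.1.symm
    exact hvert a (by simp) ha (hflat' z a s.reverse (by simp)).symm
  · have hnodup := hsaw.2.1
    simp [hleft s a rfl, hright b r rfl, List.nodup_append] at hnodup

theorem exists_odd_lowest_of_mem_flatSaws (hl : l ∈ flatSaws v) (hne : l ≠ [v]) :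
    ∃ z ∈ l, (z.1 + z.2) % 2 = 1 ∧ ∀ w ∈ l, z.2 ≤ w.2 := by
  have hv : v ∈ l := List.mem_of_getLast? hl.1.2.2
  obtain ⟨m, hm, hmin⟩ := l.toFinset.exists_min_image Prod.snd ⟨v, by simpa using hv⟩
  simp only [List.mem_toFinset] at hm hmin
  have hne' : l ≠ [m] := by
    rintro rfl
    exact hne (by simpa [eq_comm] using hv)
  rcases Int.emod_two_eq_zero_or_one (m.1 + m.2) with heven | hodd
  · obtain ⟨a, ha, hadj, hrow⟩ := exists_adj_snd_eq_of_mem_flatSaws hl hne' hm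
    refine ⟨a, ha, ?_, fun w hw => hrow ▸ hmin w hw⟩
    have hstep := unitStep_of_adj hadj
    unfold UnitStep at hstep
    omega
  · exact ⟨m, hm, hodd, hmin⟩

theorem move_mem_halfPlane {w : ℤ × ℤ} (hz : (z.1 + z.2) % 2 = 1) (hw : z.2 ≤ w.2) :
    move z (0, 1) w ∈ halfPlane := by
  have : (z.1 + z.2 + 0 + 1) % 2 = 0 := by omega
  simp only [halfPlane, move, this, if_true, Set.mem_ofPred_eq]
  omega

theorem mul_genFun_flatSaws_le : x * genFun x (flatSaws v) ≤
    genFun x (flatWalks halfPlane) * genFun x (flatWalks halfPlane) := by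
  nth_rw 1 [← pow_one x]
  refine pow_mul_genFun_le_mul (fun a b => (a ++ b.reverse.tail).map
    (move (b.head?.getD v) v)) fun l hl => ?_
  by_cases hne : l = [v]
  · have hone : [(0, 1)] ∈ flatWalks halfPlane :=
      ⟨⟨by simp [saws], by simp [halfPlane]⟩, by simp [FlatTip]⟩
    exact ⟨_, hone, _, hone, by simp [hne, move_self_left], by simp [hne]⟩
  obtain ⟨z, hz, hodd, hlow⟩ := exists_odd_lowest_of_mem_flatSaws hl hne
  obtain ⟨s, r, rfl⟩ := List.append_of_mem hz
  have hD : ∀ w ∈ s ++ z :: r, move z (0, 1) w ∈ halfPlane :=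
    fun w hw => move_mem_halfPlane hodd (hlow w hw)
  refine ⟨(s ++ [z]).map (move z (0, 1)), map_move_mem_flatWalks (left_mem_saws hl.1)
      (.of_append (r := r) (by simpa using hl.2.1)) fun w hw => hD w (by grind),
    (z :: r).reverse.map (move z (0, 1)), map_move_mem_flatWalks
      (reverse_mem_saws (right_mem_saws hl.1))
      (.of_append (r := s.reverse) (by simpa using hl.2.2)) fun w hw => hD w (by grind), ?_,
    by simp; omega⟩
  have hhead : ((z :: r).reverse.map (move z (0, 1))).head? = some (move z (0, 1) v) := by
    rw [List.head?_map, List.head?_reverse, (right_mem_saws hl.1).2.2, Option.map_some]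
  have hback : move (move z (0, 1) v) v ∘ move z (0, 1) = id := funext fun w => move_move ..
  rw [hhead, Option.getD_some]
  simp [hback, move_move]

theorem genFun_saws_le_mul_genFun_flatTip :
    genFun x (saws hexLattice v) ≤ (1 + x) * genFun x {l ∈ saws hexLattice v | FlatTip l} := by
  have hcover : saws hexLattice v ⊆ {l ∈ saws hexLattice v | FlatTip l} ∪
      {l | ∃ b r, l = (b.1, b.2 + vertStep b) :: b :: r ∧
        b :: r ∈ {l ∈ saws hexLattice v | FlatTip l}} := fun l hl => by
    by_cases hflat : FlatTip l
    · exact .inl ⟨hl, hflat⟩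
    unfold FlatTip at hflat
    push Not at hflat
    obtain ⟨a, b, r, rfl, hne⟩ := hflat
    have hab := (List.isChain_cons_cons.1 hl.1).1.symm
    exact .inr ⟨b, r, by rw [← eq_of_adj_of_snd_ne hab hne.symm],
      right_mem_saws (s := [a]) hl, flatTip_of_cons hl hne⟩
  rw [add_mul, one_mul]
  refine (genFun_mono hcover).trans (genFun_union_le.trans (add_le_add_right ?_ _))
  refine genFun_le_mul_genFun (fun a => a.head?.elim [] fun b => (b.1, b.2 + vertStep b) :: a) ?_
  rintro l ⟨b, r, rfl, hb⟩
  exact ⟨_, hb, rfl, rfl⟩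

theorem genFun_flatTip_le_add_mul : genFun x {l ∈ saws hexLattice v | FlatTip l} ≤
    genFun x (flatSaws v) + x * genFun x (flatSaws (v.1, v.2 + vertStep v)) := by
  have hcover : {l ∈ saws hexLattice v | FlatTip l} ⊆ flatSaws v ∪
      {l | ∃ a ∈ flatSaws (v.1, v.2 + vertStep v), a ++ [v] = l} := fun l hl => by
    by_cases hflat : FlatTip l.reverse
    · exact .inl ⟨hl.1, hl.2, hflat⟩
    unfold FlatTip at hflat
    push Not at hflat
    obtain ⟨a, b, r, hr, hne⟩ := hflat
    obtain ⟨w, hrev⟩ : ∃ w, l.reverse ∈ saws hexLattice w := by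
      obtain _ | ⟨w, t⟩ := l
      · simp at hr
      · exact ⟨w, reverse_mem_saws hl.1⟩
    rw [hr] at hrev
    obtain rfl : l = r.reverse ++ [b] ++ [a] := by simpa using congrArg List.reverse hr
    obtain rfl : a = v := by simpa using hl.1.2.2
    have hab := (List.isChain_cons_cons.1 hrev.1).1
    rw [← eq_of_adj_of_snd_ne hab hne]
    refine .inr ⟨_, ⟨left_mem_saws (r := [a]) (by simpa using hl.1), hl.2.of_append, ?_⟩, rfl⟩
    simpa using flatTip_of_cons hrev hne
  refine (genFun_mono hcover).trans (genFun_union_le.trans (add_le_add_right ?_ _))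
  refine genFun_le_mul_genFun (fun a => a ++ [v]) ?_
  rintro l ⟨a, ha, rfl⟩
  exact ⟨a, ha, rfl, by simp⟩

end FlatSaws

theorem genFun_flatSaws_ne_top {x : ℝ≥0∞} (hx : x ≠ 0) (hxc : x < xc) (v : ℤ × ℤ) :
    genFun x (flatSaws v) ≠ ∞ := by
  have h := genFun_flatWalks_halfPlane_ne_top hx hxc
  refine fun htop => ENNReal.mul_ne_top h h (top_unique ?_)
  simpa [htop, ENNReal.mul_top hx] using mul_genFun_flatSaws_le (x := x) (v := v)

theorem genFun_saws_ne_top {x : ℝ≥0∞} (hx : x ≠ 0) (hxc : x < xc) (v : ℤ × ℤ) :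
    genFun x (saws hexLattice v) ≠ ∞ := by
  have hflat := genFun_flatSaws_ne_top hx hxc
  have htip := ne_top_of_le_ne_top (ENNReal.add_ne_top.2
    ⟨hflat v, ENNReal.mul_ne_top hxc.ne_top (hflat _)⟩) genFun_flatTip_le_add_mul
  exact ne_top_of_le_ne_top (ENNReal.mul_ne_top (by simp [hxc.ne_top]) htip)
    genFun_saws_le_mul_genFun_flatTip

/-! ### The counting series -/

theorem tsum_sawCount_mul_pow_ne_top {x : ℝ≥0∞} (hx : x ≠ 0) (hxc : x < xc) (v : ℤ × ℤ) :
    ∑' n, (sawCount hexLattice v n : ℝ≥0∞) * x ^ n ≠ ∞ := fun h =>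
  genFun_saws_ne_top hx hxc v (by rw [genFun_saws, h, ENNReal.mul_top hx])

theorem tsum_sawCount_mul_xc_pow_eq_top (v : ℤ × ℤ) :
    ∑' n, (sawCount hexLattice v n : ℝ≥0∞) * (xc : ℝ≥0∞) ^ n = ∞ := by
  by_contra h
  have hle := genFun_saws_le_genFun_saws xc (0, 1) v
  rw [genFun_saws_xc_eq_top, genFun_saws] at hle
  exact ENNReal.mul_ne_top ENNReal.coe_ne_top h (top_unique hle)

end HexSAW

/-- The Duminil-Copin–Smirnov theorem: the connective constant of the hexagonal lattice
is `√(2 + √2)`. -/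
theorem hexagonal_connective_constant :
    ∀ v : ℤ × ℤ,
      Tendsto (fun n : ℕ => (sawCount hexLattice v n : ℝ) ^ ((1 : ℝ) / n)) atTop
        (nhds (Real.sqrt (2 + Real.sqrt 2))) := by
  intro v
  have hsub := HexSAW.sawCount_add_le
    (fun v w => ⟨HexSAW.moveIso v w, HexSAW.move_self_left v w⟩) v
  rw [← HexSAW.coe_xc_inv_eq_sqrt]
  refine HexSAW.tendsto_rpow_inv_of_submultiplicative HexSAW.xc_pos hsub (fun x hx hxc => ?_)
    (HexSAW.tsum_sawCount_mul_xc_pow_eq_top v)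
  exact HexSAW.tsum_sawCount_mul_pow_ne_top (by exact_mod_cast hx.ne') (by exact_mod_cast hxc) v
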